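/- arXiv:1305.3318 — 2 statements merged into one kernel-verified Lean document; each statement's English description precedes it below -/
import Mathlib

section
/- (Hardy–Ramanujan asymptotic for the partition function.) As n → ∞, p(n) ∼ e^{π√(2n/3)}/(4n√3); that is, the sequence p(n) · 4n√3 / exp(π·√(2n/3)) tends to 1 as n → ∞. -/
/-- `p n` is the classical partition function: the number of partitions of `n`. -/
def p (n : ℕ) : ℕ := Fintype.card (Nat.Partition n)

section Part1

open Filter Topology
open scoped PowerSeries.WithPiTopology

noncomputable def gfac (i : ℕ) : PowerSeries ℕ :=
  PowerSeries.mk fun n => if (i + 1) ∣ n then 1 else 0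

lemma coeff_gfac (i n : ℕ) : (gfac i).coeff n = if (i + 1) ∣ n then 1 else 0 := by
  simp [gfac]

lemma gfac_aux {R : Type*} [CommSemiring R] [TopologicalSpace R] [T2Space R] (i : ℕ) :
    (1 + ∑' j : ℕ, (1 : R) • (PowerSeries.X : PowerSeries R) ^ ((i + 1) * (j + 1))) =
      PowerSeries.mk fun n => if (i + 1) ∣ n then 1 else 0 := by
  ext n
  rw [map_add, (Nat.Partition.summable_genFun_term (fun _ _ => (1 : R)) i).map_tsum _
    (PowerSeries.WithPiTopology.continuous_coeff _ _)]
  simp only [one_smul, PowerSeries.coeff_X_pow, PowerSeries.coeff_one, PowerSeries.coeff_mk]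
  by_cases hd : (i + 1) ∣ n
  · obtain ⟨k, rfl⟩ := hd
    rcases k with _ | k
    · simp
    · rw [tsum_eq_single k]
      · simp
      · intro b hb
        rw [if_neg]
        intro h
        have := Nat.eq_of_mul_eq_mul_left (Nat.succ_pos i) h
        omega
  · rw [if_neg hd, if_neg (by rintro rfl; simp at hd)]
    rw [zero_add]
    convert tsum_zero with j
    rw [if_neg]
    rintro rfl
    simp at hd

def HE (f : PowerSeries ℕ) (q v : ℂ) : Prop :=
  Summable (fun n => ‖((f.coeff n : ℕ) : ℂ) * q ^ n‖) ∧
    ∑' n, ((f.coeff n : ℕ) : ℂ) * q ^ n = v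

lemma cauchy_aux {F G H : ℕ → ℂ} (hF : Summable fun n => ‖F n‖) (hG : Summable fun n => ‖G n‖)
    (hH : ∀ n, H n = ∑ kl ∈ Finset.HasAntidiagonal.antidiagonal n, F kl.1 * G kl.2) :
    Summable (fun n => ‖H n‖) ∧ ∑' n, H n = (∑' n, F n) * ∑' n, G n := by
  have h : H = fun n => ∑ kl ∈ Finset.HasAntidiagonal.antidiagonal n, F kl.1 * G kl.2 :=
    funext hH
  rw [h, tsum_mul_tsum_eq_tsum_sum_antidiagonal_of_summable_norm hF hG]
  exact ⟨summable_norm_sum_mul_antidiagonal_of_summable_norm hF hG, rfl⟩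

lemma HE.mul {f g : PowerSeries ℕ} {q v w : ℂ} (hf : HE f q v) (hg : HE g q w) :
    HE (f * g) q (v * w) := by
  have key : ∀ n, (((f * g).coeff n : ℕ) : ℂ) * q ^ n =
      ∑ kl ∈ Finset.HasAntidiagonal.antidiagonal n, (((f.coeff kl.1 : ℕ) : ℂ) * q ^ kl.1) *
        (((g.coeff kl.2 : ℕ) : ℂ) * q ^ kl.2) := by
    intro n
    rw [PowerSeries.coeff_mul]
    push_cast
    rw [Finset.sum_mul]
    refine Finset.sum_congr rfl fun kl hkl => ?_
    rw [← Finset.HasAntidiagonal.mem_antidiagonal.mp hkl, pow_add]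
    ring
  have := cauchy_aux hf.1 hg.1 key
  rw [hf.2, hg.2] at this
  exact this

lemma HE_gfac (i : ℕ) {q : ℂ} (hq : ‖q‖ < 1) : HE (gfac i) q (1 - q ^ (i + 1))⁻¹ := by
  have hq' : ‖q ^ (i + 1)‖ < 1 := by
    rw [norm_pow]; exact pow_lt_one₀ (norm_nonneg _) hq (by simp)
  have hinj : Function.Injective (fun j : ℕ => (i + 1) * j) := fun a b h =>
    Nat.eq_of_mul_eq_mul_left (Nat.succ_pos i) h
  constructor
  · refine Summable.of_nonneg_of_le (fun _ => norm_nonneg _) (fun n => ?_)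
      (summable_geometric_of_lt_one (norm_nonneg q) hq)
    rw [coeff_gfac, norm_mul, norm_pow]
    split_ifs <;> simp
  · refine HasSum.tsum_eq ?_
    rw [← hinj.hasSum_iff]
    · have h := hasSum_geometric_of_norm_lt_one hq'
      have he : ((fun n => (((gfac i).coeff n : ℕ) : ℂ) * q ^ n) ∘ fun j => (i + 1) * j) =
          fun n => (q ^ (i + 1)) ^ n := by
        funext j
        simp [coeff_gfac, pow_mul]
      rw [he]
      exact h
    · intro n hn
      rw [coeff_gfac, if_neg]
      · simp
      · rintro ⟨k, rfl⟩
        exact hn ⟨k, rfl⟩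

lemma HE_prod (K : ℕ) {q : ℂ} (hq : ‖q‖ < 1) :
    HE (∏ i ∈ Finset.range K, gfac i) q (∏ i ∈ Finset.range K, (1 - q ^ (i + 1)))⁻¹ := by
  induction K with
  | zero =>
    constructor
    · refine summable_of_ne_finset_zero (s := {0}) fun n hn => ?_
      simp at hn
      simp [PowerSeries.coeff_one, hn]
    · rw [tsum_eq_single 0]
      · simp
      · intro n hn
        simp [PowerSeries.coeff_one, hn]
  | succ K ih =>
    rw [Finset.prod_range_succ, Finset.prod_range_succ, mul_inv]
    exact ih.mul (HE_gfac K hq)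

lemma coeff_prod_mono (n : ℕ) :
    Monotone fun K => (∏ i ∈ Finset.range K, gfac i).coeff n := by
  refine monotone_nat_of_le_succ fun K => ?_
  rw [Finset.prod_range_succ, PowerSeries.coeff_mul]
  refine le_trans ?_ (Finset.single_le_sum (a := (n, 0)) (fun _ _ => Nat.zero_le _) (by simp))
  simp [-PowerSeries.coeff_zero_eq_constantCoeff, coeff_gfac]

lemma coeff_prod_tendsto (n : ℕ) :
    Tendsto (fun K => (∏ i ∈ Finset.range K, gfac i).coeff n) atTop (𝓝 (p n)) := by
  have h := (Nat.Partition.hasProd_genFun (fun _ _ => (1 : ℕ))).tendsto_prod_nat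
  rw [PowerSeries.WithPiTopology.tendsto_iff_coeff_tendsto] at h
  have := h n
  rw [Nat.Partition.coeff_genFun] at this
  simp only [gfac_aux] at this
  simpa [Finsupp.prod, p, gfac] using this

lemma coeff_prod_le (n K : ℕ) : (∏ i ∈ Finset.range K, gfac i).coeff n ≤ p n :=
  (coeff_prod_mono n).ge_of_tendsto (coeff_prod_tendsto n) K

/-- Euler product -/
noncomputable def EP (q : ℂ) : ℂ := ∏' n : ℕ, (1 - q ^ (n + 1))

lemma EP_tendsto {q : ℂ} (hq : ‖q‖ < 1) :
    Tendsto (fun K => ∏ i ∈ Finset.range K, (1 - q ^ (i + 1))) atTop (𝓝 (EP q)) :=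
  (ModularForm.multipliable_one_sub_pow hq).hasProd.tendsto_prod_nat

lemma EP_ne_zero {q : ℂ} (hq : ‖q‖ < 1) : EP q ≠ 0 := by
  unfold EP
  refine tprod_one_add_ne_zero_of_summable (f := fun n : ℕ ↦ -q ^ (n + 1)) ?_ ?_
  · intro i h
    have hq' : ‖q ^ (i + 1)‖ < 1 := by
      rw [norm_pow]; exact pow_lt_one₀ (norm_nonneg _) hq (by simp)
    have : q ^ (i + 1) = 1 := by linear_combination -h
    rw [this] at hq'
    simp at hq'
  · simpa using (summable_nat_add_iff 1).mpr (summable_geometric_of_lt_one (norm_nonneg _) hq)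

lemma summable_p {r : ℝ} (hr0 : 0 ≤ r) (hr : r < 1) : Summable fun n => (p n : ℝ) * r ^ n := by
  have hq : ‖(r : ℂ)‖ < 1 := by simpa [abs_of_nonneg hr0] using hr
  have hlim := (EP_tendsto hq).inv₀ (EP_ne_zero hq) |>.norm
  obtain ⟨B, hB⟩ := hlim.bddAbove_range
  refine summable_of_sum_range_le (c := B) (fun n => by positivity) fun N => ?_
  have ht : Tendsto (fun K => ∑ n ∈ Finset.range N,
      (((∏ i ∈ Finset.range K, gfac i).coeff n : ℕ) : ℝ) * r ^ n) atTop
      (𝓝 (∑ n ∈ Finset.range N, (p n : ℝ) * r ^ n)) := by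
    refine tendsto_finsetSum _ fun n _ => Tendsto.mul_const _ ?_
    exact (continuous_of_discreteTopology.tendsto _).comp (coeff_prod_tendsto n)
  refine le_of_tendsto ht (Eventually.of_forall fun K => ?_)
  refine le_trans ?_ (hB ⟨K, rfl⟩)
  obtain ⟨h1, h2⟩ := HE_prod K hq
  simp only
  rw [← h2]
  have h3 : ∑' n, (((∏ i ∈ Finset.range K, gfac i).coeff n : ℕ) : ℂ) * (r : ℂ) ^ n =
    ((∑' n, (((∏ i ∈ Finset.range K, gfac i).coeff n : ℕ) : ℝ) * r ^ n : ℝ) : ℂ) := by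
    push_cast; rfl
  rw [h3, Complex.norm_real]
  refine le_trans ?_ (le_abs_self _)
  refine Summable.sum_le_tsum _ (fun _ _ => by positivity) ?_
  convert h1 using 2 with n
  simp [abs_of_nonneg hr0]

lemma hasSum_p {q : ℂ} (hq : ‖q‖ < 1) : HasSum (fun n => (p n : ℂ) * q ^ n) (EP q)⁻¹ := by
  have hs := summable_p (norm_nonneg q) hq
  have hs' : Summable fun n => (p n : ℂ) * q ^ n := by
    refine Summable.of_norm ?_
    simpa using hs
  have h1 := tendsto_tsum_of_dominated_convergence (𝓕 := atTop)
    (f := fun K n => (((∏ i ∈ Finset.range K, gfac i).coeff n : ℕ) : ℂ) * q ^ n)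
    (g := fun n => (p n : ℂ) * q ^ n) hs
    (fun n => Tendsto.mul_const _
      ((continuous_of_discreteTopology.tendsto _).comp (coeff_prod_tendsto n)))
    (Eventually.of_forall fun K n => by
      rw [norm_mul, norm_pow]
      gcongr
      simpa using coeff_prod_le n K)
  simp_rw [(HE_prod _ hq).2] at h1
  have h2 := (EP_tendsto hq).inv₀ (EP_ne_zero hq)
  rw [← tendsto_nhds_unique h1 h2]
  exact hs'.hasSum

end Part1

open Filter Topology

lemma factor_bound {w : ℂ} (hw : ‖w‖ < 1) :
    (1 - ‖w‖) * Real.exp (‖w‖ - w.re) ≤ ‖1 - w‖ := by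
  have h1 := Complex.hasSum_re (Complex.hasSum_taylorSeries_neg_log hw)
  have hw' : ‖((‖w‖ : ℝ) : ℂ)‖ < 1 := by simpa using hw
  have h2 := Complex.hasSum_re (Complex.hasSum_taylorSeries_neg_log hw')
  have h3 := h2.sub h1
  have h4 : ∀ n : ℕ, 0 ≤ ((((‖w‖ : ℝ) : ℂ) ^ n / (n : ℂ)).re - (w ^ n / (n : ℂ)).re) := by
    intro n
    rw [Complex.div_natCast_re, Complex.div_natCast_re, ← sub_div]
    refine div_nonneg (sub_nonneg.mpr ?_) (Nat.cast_nonneg _)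
    have : (w ^ n).re ≤ ‖w‖ ^ n := by
      rw [← norm_pow]; exact Complex.re_le_norm _
    rw [← Complex.ofReal_pow, Complex.ofReal_re]
    exact this
  have h5 := le_hasSum h3 1 (fun n _ => h4 n)
  have h1w : 0 < ‖1 - w‖ := by
    rw [norm_pos_iff, sub_ne_zero]
    rintro rfl
    simp at hw
  have h1r : ‖1 - ((‖w‖ : ℝ) : ℂ)‖ = 1 - ‖w‖ := by
    rw [← Complex.ofReal_one, ← Complex.ofReal_sub, Complex.norm_real, Real.norm_of_nonneg]
    linarith
  simp only [pow_one, Nat.cast_one, div_one, Complex.ofReal_re, Complex.neg_re,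
    Complex.log_re, h1r] at h5
  have h6 : 0 < 1 - ‖w‖ := by linarith
  rw [← Real.exp_log h1w]
  conv_lhs => rw [← Real.exp_log h6]
  rw [← Real.exp_add, Real.exp_le_exp]
  linarith

lemma EP_bound {q : ℂ} (hq : ‖q‖ < 1) :
    ‖(EP q)⁻¹‖ ≤ ‖(EP (‖q‖ : ℝ))⁻¹‖ *
      Real.exp (-((1 - ‖q‖)⁻¹ - ((1 - q)⁻¹).re)) := by
  have hr : ‖((‖q‖ : ℝ) : ℂ)‖ < 1 := by simpa using hq
  have t1 := (EP_tendsto hq).norm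
  have t2 := (EP_tendsto hr).norm
  have s1 := ((Complex.hasSum_re (hasSum_geometric_of_norm_lt_one hq)))
  have s2 := (hasSum_geometric_of_lt_one (norm_nonneg q) hq)
  have s3 := (s2.sub s1)
  have s4 := (hasSum_nat_add_iff' 1).mpr s3
  simp only [Finset.range_one, Finset.sum_singleton, pow_zero, Complex.one_re, sub_self,
    sub_zero] at s4
  have s5 := (Real.continuous_exp.tendsto _).comp s4.tendsto_sum_nat
  have key : ‖EP (‖q‖ : ℝ)‖ * Real.exp ((1 - ‖q‖)⁻¹ - ((1 - q)⁻¹).re) ≤ ‖EP q‖ := by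
    refine le_of_tendsto_of_tendsto' (t2.mul s5) t1 fun K => ?_
    simp only [Function.comp_apply, Real.exp_sum, norm_prod, ← Finset.prod_mul_distrib]
    refine Finset.prod_le_prod (fun _ _ => by positivity) fun i _ => ?_
    have hq' : ‖q ^ (i + 1)‖ < 1 := by
      rw [norm_pow]; exact pow_lt_one₀ (norm_nonneg _) hq (by simp)
    have := factor_bound hq'
    rw [norm_pow] at this hq'
    have e1 : ‖1 - ((‖q‖ : ℝ) : ℂ) ^ (i + 1)‖ = 1 - ‖q‖ ^ (i + 1) := by
      rw [← Complex.ofReal_one, ← Complex.ofReal_pow, ← Complex.ofReal_sub, Complex.norm_real,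
        Real.norm_of_nonneg]
      linarith
    rw [e1]
    exact this
  have p1 : 0 < ‖EP q‖ := norm_pos_iff.mpr (EP_ne_zero hq)
  have p2 : 0 < ‖EP (‖q‖ : ℝ)‖ := norm_pos_iff.mpr (EP_ne_zero hr)
  rw [norm_inv, norm_inv, Real.exp_neg, ← mul_inv]
  exact inv_anti₀ (by positivity) key

lemma EP_modular {z : ℂ} (hz : 0 < z.re) :
    (EP (Complex.exp (-z)))⁻¹ = (Complex.sqrt Complex.I)⁻¹ *
      Complex.sqrt (Complex.I * z / (2 * Real.pi)) * Complex.exp (-z / 24) *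
      Complex.exp (Real.pi ^ 2 / (6 * z)) * (EP (Complex.exp (-(4 * Real.pi ^ 2 / z))))⁻¹ := by
  have hπ : (Real.pi : ℂ) ≠ 0 := by exact_mod_cast Real.pi_ne_zero
  have hz0 : z ≠ 0 := by rintro rfl; simp at hz
  set τ : ℂ := Complex.I * z / (2 * Real.pi) with hτ
  have hτim : 0 < τ.im := by
    have : τ = Complex.I * z / ((2 * Real.pi : ℝ) : ℂ) := by rw [hτ]; push_cast; rfl
    rw [this, Complex.div_ofReal_im]
    simp
    positivity
  have h := ModularForm.eta_comp_eq_csqrt_I_inv (x := τ) hτim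
  have e : ∀ w, ModularForm.eta w = Function.Periodic.qParam 24 w * EP (Function.Periodic.qParam 1 w) :=
    fun w => rfl
  have q1 : Function.Periodic.qParam 1 τ = Complex.exp (-z) := by
    rw [Function.Periodic.qParam, hτ]; congr 1; field_simp; simp
  have q2 : Function.Periodic.qParam 24 τ = Complex.exp (-z / 24) := by
    rw [Function.Periodic.qParam, hτ]; congr 1; field_simp; simp
  have q3 : Function.Periodic.qParam 1 (-1 / τ) = Complex.exp (-(4 * Real.pi ^ 2 / z)) := by
    rw [Function.Periodic.qParam, hτ]; congr 1; field_simp; simp; norm_num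
  have q4 : Function.Periodic.qParam 24 (-1 / τ) = (Complex.exp (Real.pi ^ 2 / (6 * z)))⁻¹ := by
    rw [Function.Periodic.qParam, hτ, ← Complex.exp_neg]; congr 1; field_simp; simp; norm_num
  simp only [Function.comp_apply, Pi.smul_apply, Pi.mul_apply, smul_eq_mul, e, q1, q2, q3, q4] at h
  have n1 : EP (Complex.exp (-z)) ≠ 0 := EP_ne_zero (by
    rw [Complex.norm_exp]; simpa using hz)
  have n2 : EP (Complex.exp (-(4 * Real.pi ^ 2 / z))) ≠ 0 := EP_ne_zero (by
    rw [Complex.norm_exp]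
    have : (4 * (Real.pi : ℂ) ^ 2 / z) = ((4 * Real.pi ^ 2 : ℝ) : ℂ) * z⁻¹ := by
      push_cast; ring
    rw [this]
    simp only [Complex.neg_re, Complex.re_ofReal_mul, Complex.inv_re, Real.exp_lt_one_iff]
    have := Complex.normSq_pos.mpr hz0
    rw [neg_lt_zero]
    positivity)
  have n3 := Complex.exp_ne_zero (Real.pi ^ 2 / (6 * z))
  field_simp at h ⊢
  rw [h]
  have : Complex.sqrt Complex.I ≠ 0 := by simp [Complex.sqrt]
  have : Complex.sqrt τ ≠ 0 := by
    have : τ ≠ 0 := by rintro h0; rw [h0] at hτim; simp at hτim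
    simp [Complex.sqrt, this]
  field_simp

lemma cauchy_p (n : ℕ) {t : ℝ} (ht : 0 < t) :
    ∫ θ in (-Real.pi)..Real.pi, (EP (Complex.exp (-(t + θ * Complex.I))))⁻¹ *
      Complex.exp (n * (t + θ * Complex.I)) = 2 * Real.pi * p n := by
  have hn : ∀ θ : ℝ, ‖Complex.exp (-(t + θ * Complex.I))‖ = Real.exp (-t) := by
    intro θ; rw [Complex.norm_exp]; simp
  have hlt : Real.exp (-t) < 1 := by simpa using ht
  have hs := summable_p (Real.exp_pos (-t)).le hlt
  have H := intervalIntegral.hasSum_integral_of_dominated_convergence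
    (μ := MeasureTheory.volume) (a := -Real.pi) (b := Real.pi)
    (F := fun (m : ℕ) (θ : ℝ) => (p m : ℂ) * Complex.exp (-(t + θ * Complex.I)) ^ m *
      Complex.exp (n * (t + θ * Complex.I)))
    (f := fun θ : ℝ => (EP (Complex.exp (-(t + θ * Complex.I))))⁻¹ *
      Complex.exp (n * (t + θ * Complex.I)))
    (fun m _ => (p m : ℝ) * Real.exp (-t) ^ m * Real.exp (n * t))
    (fun m => Continuous.aestronglyMeasurable (by fun_prop))
    (fun m => MeasureTheory.ae_of_all _ fun θ _ => by
      rw [norm_mul, norm_mul, norm_pow, hn, Complex.norm_exp]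
      simp)
    (MeasureTheory.ae_of_all _ fun θ _ => hs.mul_right _)
    intervalIntegrable_const
    (MeasureTheory.ae_of_all _ fun θ _ => (hasSum_p ((hn θ).trans_lt hlt)).mul_right _)
  have hI : ∀ m : ℕ, ∫ θ in (-Real.pi)..Real.pi,
      (p m : ℂ) * Complex.exp (-(t + θ * Complex.I)) ^ m *
      Complex.exp (n * (t + θ * Complex.I)) = if m = n then 2 * (Real.pi : ℂ) * (p n : ℂ) else (0 : ℂ) := by
    intro m
    have h1 : ∀ θ : ℝ, (p m : ℂ) * Complex.exp (-(t + θ * Complex.I)) ^ m *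
      Complex.exp (n * (t + θ * Complex.I)) = (p m : ℂ) * Complex.exp ((n - m) * t) *
        Complex.exp ((n - m) * Complex.I * θ) := by
      intro θ
      rw [← Complex.exp_nat_mul, mul_assoc, mul_assoc, ← Complex.exp_add, ← Complex.exp_add]
      ring_nf
    simp_rw [h1]
    rw [intervalIntegral.integral_const_mul]
    split_ifs with hmn
    · subst hmn
      simp
      ring
    · have hc : ((n : ℂ) - m) * Complex.I ≠ 0 := by
        refine mul_ne_zero (sub_ne_zero.mpr ?_) Complex.I_ne_zero
        exact_mod_cast (Ne.symm hmn)
      rw [integral_exp_mul_complex hc]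
      have : Complex.exp ((n - m) * Complex.I * (Real.pi : ℝ)) =
          Complex.exp ((n - m) * Complex.I * ((-Real.pi : ℝ) : ℂ)) := by
        rw [Complex.exp_eq_exp_iff_exists_int]
        refine ⟨n - m, ?_⟩
        push_cast
        ring
      rw [this]
      simp
  simp_rw [hI] at H
  rw [← H.tsum_eq, tsum_ite_eq]


lemma saving {t θ : ℝ} (ht : 0 < t) (ht1 : t ≤ 1) (hθ : |θ| ≤ Real.pi) :
    θ ^ 2 / (15 * t * (t ^ 2 + θ ^ 2)) ≤
      (1 - Real.exp (-t))⁻¹ - ((1 - Complex.exp (-(t + θ * Complex.I)))⁻¹).re := by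
  set r := Real.exp (-t) with hr
  have hq : Complex.exp (-(t + θ * Complex.I)) = ⟨r * Real.cos θ, -(r * Real.sin θ)⟩ := by
    apply Complex.ext
    · rw [Complex.exp_re]; simp [hr]
    · rw [Complex.exp_im]; simp [hr]
  have hr1 : r < 1 := by rw [hr]; simpa using ht
  have hr3 : 1 / 3 ≤ r := by
    have h1 : Real.exp (-1) ≤ r := by rw [hr, Real.exp_le_exp]; linarith
    have h2 : Real.exp 1 < 3 := by have := Real.exp_one_lt_d9; linarith
    rw [Real.exp_neg] at h1
    refine le_trans ?_ h1
    rw [one_div]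
    exact inv_anti₀ (Real.exp_pos 1) h2.le
  have hat : 1 - r ≤ t := by
    have := Real.add_one_le_exp (-t)
    rw [← hr] at this
    linarith
  set a := 1 - r with ha
  have ha0 : 0 < a := by linarith
  set b := 1 - Real.cos θ with hb
  have hbθ : θ ^ 2 / 5 ≤ b := by
    have h := Real.cos_le_one_sub_mul_cos_sq hθ
    have hpi : Real.pi ^ 2 ≤ 10 := by
      have := Real.pi_lt_d2; have := Real.pi_pos; nlinarith
    have : 1 / 5 ≤ 2 / Real.pi ^ 2 := by
      rw [div_le_div_iff₀ (by norm_num) (by positivity)]; linarith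
    have : 1 / 5 * θ ^ 2 ≤ 2 / Real.pi ^ 2 * θ ^ 2 := by gcongr
    linarith
  have hb0 : 0 ≤ b := le_trans (by positivity) hbθ
  have hu : θ ^ 2 / 15 ≤ r * b := by nlinarith
  have hns : Complex.normSq (1 - Complex.exp (-(t + θ * Complex.I))) = a ^ 2 + 2 * (r * b) := by
    rw [hq, Complex.normSq_apply]
    simp only [Complex.sub_re, Complex.one_re, Complex.sub_im, Complex.one_im]
    have := Real.sin_sq_add_cos_sq θ
    rw [ha, hb]
    linear_combination r ^ 2 * this
  have hre : ((1 - Complex.exp (-(t + θ * Complex.I)))⁻¹).re =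
      (a + r * b) / (a ^ 2 + 2 * (r * b)) := by
    rw [Complex.inv_re, hns, hq]
    simp only [Complex.sub_re, Complex.one_re]
    rw [ha, hb]
    ring
  rw [hre]
  have hrb : 0 ≤ r * b := by positivity
  have hS : a⁻¹ - (a + r * b) / (a ^ 2 + 2 * (r * b)) =
      (r * b) * (1 + r) / (a * (a ^ 2 + 2 * (r * b))) := by
    have h0 : a ^ 2 + 2 * (r * b) ≠ 0 := by positivity
    have har : r = 1 - a := by rw [ha]; ring
    field_simp
    rw [har]
    ring
  rw [hS]
  have h1 : (r * b) / (t * (t ^ 2 + 2 * (r * b))) ≤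
      (r * b) * (1 + r) / (a * (a ^ 2 + 2 * (r * b))) := by
    refine div_le_div₀ (by positivity) (by nlinarith) (by positivity) ?_
    gcongr
  refine le_trans ?_ h1
  generalize r * b = u at hu hrb
  rw [div_le_div_iff₀ (by positivity) (by positivity)]
  have h2 : θ ^ 2 * (t ^ 2 + 2 * u) ≤ u * (15 * (t ^ 2 + θ ^ 2)) := by
    nlinarith [mul_nonneg hrb (sq_nonneg θ), mul_nonneg (sub_nonneg.mpr hu) (sq_nonneg t)]
  nlinarith

lemma exp_saving {x w S : ℝ} (hx : 0 < x) (hw : w ^ 2 ≤ 6 * x ^ 6)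
    (hS : x ^ 2 * w ^ 2 / (20 * (x ^ 2 + w ^ 2)) ≤ S) :
    Real.exp (-S) ≤ 2304001 * (1 + w ^ 2)⁻¹ := by
  rw [Real.exp_neg, ← div_eq_mul_inv, inv_le_comm₀ (Real.exp_pos _) (by positivity), inv_div]
  rw [div_le_iff₀ (by norm_num)]
  have hSnn : 0 ≤ S := le_trans (by positivity) hS
  rcases le_total (w ^ 2) (x ^ 2) with h | h
  · have h1 : w ^ 2 / 40 ≤ S := by
      refine le_trans ?_ hS
      rw [div_le_div_iff₀ (by norm_num) (by positivity)]
      nlinarith [mul_nonneg (sq_nonneg w) (sub_nonneg.mpr h)]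
    have := Real.add_one_le_exp S
    nlinarith [sq_nonneg w]
  · have h1 : x ^ 2 / 40 ≤ S := by
      refine le_trans ?_ hS
      rw [div_le_div_iff₀ (by norm_num) (by positivity)]
      nlinarith [mul_nonneg (sq_nonneg x) (sub_nonneg.mpr h)]
    have h2 := Real.pow_div_factorial_le_exp S hSnn 3
    have h3 : (x ^ 2 / 40) ^ 3 ≤ S ^ 3 := by gcongr
    have h4 := Real.add_one_le_exp S
    norm_num [Nat.factorial] at h2
    have h5 : (x ^ 2 / 40) ^ 3 = x ^ 6 / 64000 := by ring
    rw [h5] at h3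
    nlinarith

lemma EP_continuousAt {q : ℂ} (hq : ‖q‖ < 1) : ContinuousAt EP q :=
  (ModularForm.differentiableOn_tprod_one_sub_pow.differentiableAt
    (Metric.isOpen_ball.mem_nhds (by simpa using hq))).continuousAt

noncomputable def cc : ℝ := Real.pi / Real.sqrt 6

lemma cc_pos : 0 < cc := by unfold cc; positivity

lemma cc_sq : cc ^ 2 = Real.pi ^ 2 / 6 := by
  unfold cc; rw [div_pow, Real.sq_sqrt (by norm_num)]

noncomputable def zz (x w : ℝ) : ℂ := ((cc / x ^ 2 : ℝ) : ℂ) + ((cc / x ^ 3 * w : ℝ) : ℂ) * Complex.I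

noncomputable def GG (x w : ℝ) : ℂ :=
  x * ((EP (Complex.exp (-(zz x w))))⁻¹ * Complex.exp ((x ^ 4 : ℝ) * zz x w)) *
    (Real.exp (-(2 * cc * x ^ 2)) : ℝ)

lemma zz_re (x w : ℝ) : (zz x w).re = cc / x ^ 2 := by
  unfold zz
  rw [Complex.add_re, Complex.re_ofReal_mul, Complex.ofReal_re]
  simp

lemma zz_eq {x : ℝ} (hx : 0 < x) (w : ℝ) :
    zz x w = ((cc / x ^ 2 : ℝ) : ℂ) * (1 + (w / x : ℝ) * Complex.I) := by
  have : (x : ℂ) ≠ 0 := by exact_mod_cast hx.ne'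
  unfold zz
  push_cast
  field_simp

lemma csqrt_real_mul {r : ℝ} (hr : 0 < r) {w : ℂ} (hw : w ≠ 0) :
    Complex.sqrt (r * w) = (Real.sqrt r : ℝ) * Complex.sqrt w := by
  have hr0 : (r : ℂ) ≠ 0 := by exact_mod_cast hr.ne'
  unfold Complex.sqrt
  rw [Complex.cpow_def_of_ne_zero (mul_ne_zero hr0 hw), Complex.log_ofReal_mul hr hw, add_mul,
    Complex.exp_add, Complex.cpow_def_of_ne_zero hw, Real.sqrt_eq_rpow, Complex.ofReal_cpow hr.le,
    Complex.cpow_def_of_ne_zero hr0, Complex.ofReal_log hr.le]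
  norm_num

lemma GG_eq {x : ℝ} (hx : 0 < x) (w : ℝ) :
    GG x w = Real.sqrt (cc / (2 * Real.pi)) *
      ((Complex.sqrt Complex.I)⁻¹ * Complex.sqrt (Complex.I * (1 + (w / x : ℝ) * Complex.I))) *
      Complex.exp (-zz x w / 24) * Complex.exp (-(cc * w ^ 2) / (1 + (w / x : ℝ) * Complex.I)) *
      (EP (Complex.exp (-(4 * Real.pi ^ 2 / zz x w))))⁻¹ := by
  have hre : 0 < (zz x w).re := by rw [zz_re]; have := cc_pos; positivity
  have hz0 : zz x w ≠ 0 := by intro h; rw [h] at hre; simp at hre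
  have hxc : (x : ℂ) ≠ 0 := by exact_mod_cast hx.ne'
  have hcc : (cc : ℂ) ≠ 0 := by exact_mod_cast cc_pos.ne'
  have hu0 : (1 + (w / x : ℝ) * Complex.I) ≠ 0 := by
    intro h; have := congrArg Complex.re h
    simp only [Complex.add_re, Complex.re_ofReal_mul] at this
    simp at this
  have hsq : Complex.sqrt (Complex.I * zz x w / (2 * Real.pi)) =
      ((Real.sqrt (cc / (2 * Real.pi)) / x : ℝ) : ℂ) *
        Complex.sqrt (Complex.I * (1 + (w / x : ℝ) * Complex.I)) := by
    have h1 : Complex.I * zz x w / (2 * Real.pi) = ((cc / (2 * Real.pi) / x ^ 2 : ℝ) : ℂ) *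
        (Complex.I * (1 + (w / x : ℝ) * Complex.I)) := by
      rw [zz_eq hx]; push_cast; ring
    have hp' : 0 < cc / (2 * Real.pi) / x ^ 2 := by have := cc_pos; positivity
    rw [h1, csqrt_real_mul hp' (mul_ne_zero Complex.I_ne_zero hu0),
      Real.sqrt_div' _ (by positivity), Real.sqrt_sq hx.le]
  have hexp : Complex.exp (Real.pi ^ 2 / (6 * zz x w)) * Complex.exp ((x ^ 4 : ℝ) * zz x w) *
      (Real.exp (-(2 * cc * x ^ 2)) : ℝ) =
      Complex.exp (-(cc * w ^ 2) / (1 + (w / x : ℝ) * Complex.I)) := by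
    rw [Complex.ofReal_exp, ← Complex.exp_add, ← Complex.exp_add]
    congr 1
    have h1 : ((Real.pi : ℂ) ^ 2 / (6 * zz x w)) = cc ^ 2 / zz x w := by
      have : (cc : ℂ) ^ 2 = Real.pi ^ 2 / 6 := by exact_mod_cast cc_sq
      rw [this]; field_simp
    rw [h1, zz_eq hx]
    set v := (1 + (w / x : ℝ) * Complex.I) with hv
    have hw : (w : ℂ) ^ 2 = - x ^ 2 * (v - 1) ^ 2 := by
      rw [hv]; push_cast; field_simp; ring_nf; simp
    rw [hw]
    push_cast
    field_simp
    ring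
  unfold GG
  rw [EP_modular hre, hsq, ← hexp]
  push_cast
  field_simp

lemma GG_tendsto (w : ℝ) :
    Tendsto (fun x => GG x w) atTop
      (𝓝 ((Real.sqrt (cc / (2 * Real.pi)) * Real.exp (-cc * w ^ 2) : ℝ) : ℂ)) := by
  have hv : Tendsto (fun x : ℝ => (1 + (w / x : ℝ) * Complex.I : ℂ)) atTop (𝓝 1) := by
    have h1 : Tendsto (fun x : ℝ => w / x) atTop (𝓝 0) := tendsto_const_nhds.div_atTop tendsto_id
    have h2 := (Complex.continuous_ofReal.tendsto _).comp h1
    have h3 := (h2.mul_const Complex.I).const_add 1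
    simpa using h3
  have hcx : Tendsto (fun x : ℝ => cc / x ^ 2) atTop (𝓝 0) :=
    tendsto_const_nhds.div_atTop (tendsto_pow_atTop (by norm_num))
  have hz : Tendsto (fun x : ℝ => zz x w) atTop (𝓝 0) := by
    have h2 := ((Complex.continuous_ofReal.tendsto _).comp hcx).mul hv
    simp only [Complex.ofReal_zero, zero_mul] at h2
    refine h2.congr' ?_
    filter_upwards [eventually_gt_atTop 0] with x hx
    rw [zz_eq hx]; rfl
  have hq : Tendsto (fun x : ℝ => Complex.exp (-(4 * Real.pi ^ 2 / zz x w))) atTop (𝓝 0) := by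
    rw [tendsto_zero_iff_norm_tendsto_zero]
    simp_rw [Complex.norm_exp]
    refine Real.tendsto_exp_atBot.comp ?_
    simp_rw [Complex.neg_re]
    refine tendsto_neg_atTop_atBot.comp ?_
    have h1 : Tendsto (fun x : ℝ => ((1 + (w / x : ℝ) * Complex.I : ℂ)⁻¹).re) atTop (𝓝 1) := by
      have := (Complex.continuous_re.tendsto _).comp (hv.inv₀ one_ne_zero)
      rw [inv_one, Complex.one_re] at this; exact this
    have h2 : Tendsto (fun x : ℝ => (4 * Real.pi ^ 2 / cc) * x ^ 2) atTop atTop :=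
      (tendsto_pow_atTop (by norm_num)).const_mul_atTop (by have := cc_pos; positivity)
    refine (h2.atTop_mul_pos one_pos h1).congr' ?_
    filter_upwards [eventually_gt_atTop 0] with x hx
    have : 4 * (Real.pi : ℂ) ^ 2 / zz x w = ((4 * Real.pi ^ 2 / cc * x ^ 2 : ℝ) : ℂ) *
        (1 + (w / x : ℝ) * Complex.I : ℂ)⁻¹ := by
      have hxc : (x : ℂ) ≠ 0 := by exact_mod_cast hx.ne'
      have hcc : (cc : ℂ) ≠ 0 := by exact_mod_cast cc_pos.ne'
      rw [zz_eq hx]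
      push_cast
      field_simp
    rw [this, Complex.re_ofReal_mul]
  have hE : Tendsto (fun x : ℝ => (EP (Complex.exp (-(4 * Real.pi ^ 2 / zz x w))))⁻¹) atTop
      (𝓝 1) := by
    have h0 : EP 0 = 1 := by simp [EP]
    have h1 := ((EP_continuousAt (q := 0) (by simp)).tendsto.comp hq)
    rw [h0] at h1
    simpa using h1.inv₀ one_ne_zero
  have hs : Tendsto (fun x : ℝ => (Complex.sqrt Complex.I)⁻¹ *
      Complex.sqrt (Complex.I * (1 + (w / x : ℝ) * Complex.I))) atTop (𝓝 1) := by
    have hc : ContinuousAt Complex.sqrt Complex.I := by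
      unfold Complex.sqrt
      exact continuousAt_cpow_const (by simp [Complex.slitPlane])
    have hI : Tendsto (fun x : ℝ => Complex.I * (1 + (w / x : ℝ) * Complex.I)) atTop
        (𝓝 Complex.I) := by simpa using hv.const_mul Complex.I
    have h1 := (hc.tendsto.comp hI).const_mul (Complex.sqrt Complex.I)⁻¹
    rw [inv_mul_cancel₀ (by simp [Complex.sqrt])] at h1
    exact h1
  have he1 : Tendsto (fun x : ℝ => Complex.exp (-zz x w / 24)) atTop (𝓝 1) := by
    have := (Complex.continuous_exp.tendsto _).comp ((hz.neg).div_const 24)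
    rw [neg_zero, zero_div, Complex.exp_zero] at this; exact this
  have he2 : Tendsto (fun x : ℝ =>
      Complex.exp (-(cc * w ^ 2) / (1 + (w / x : ℝ) * Complex.I))) atTop
      (𝓝 (Complex.exp (-(cc * w ^ 2)))) := by
    have := (Complex.continuous_exp.tendsto _).comp
      ((tendsto_const_nhds (x := (-(cc * w ^ 2) : ℂ))).div hv one_ne_zero)
    rw [div_one] at this; exact this
  have hall := (((hs.const_mul ((Real.sqrt (cc / (2 * Real.pi)) : ℝ) : ℂ)).mul he1).mul he2).mul hE
  have hl : ((Real.sqrt (cc / (2 * Real.pi)) * Real.exp (-cc * w ^ 2) : ℝ) : ℂ) =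
      ((Real.sqrt (cc / (2 * Real.pi)) : ℝ) : ℂ) * 1 * 1 * Complex.exp (-(cc * w ^ 2)) * 1 := by
    push_cast; simp
  rw [hl]
  refine hall.congr' ?_
  filter_upwards [eventually_gt_atTop 0] with x hx
  rw [GG_eq hx]

lemma GG_norm_le {x : ℝ} (hx : 2 ≤ x) {w : ℝ} (hw : |w| ≤ Real.sqrt 6 * x ^ 3) :
    ‖GG x w‖ ≤ ‖GG x 0‖ * (2304001 * (1 + w ^ 2)⁻¹) := by
  have hx0 : 0 < x := by linarith
  have hc := cc_pos
  have hc2 : cc ≤ 4 / 3 := by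
    have h1 := cc_sq
    have hpi : Real.pi ^ 2 ≤ 10 := by
      have := Real.pi_lt_d2; have := Real.pi_pos; nlinarith
    nlinarith
  have ht0 : 0 < cc / x ^ 2 := by positivity
  have ht1 : cc / x ^ 2 ≤ 1 := by
    rw [div_le_one (by positivity)]; nlinarith
  have hθ : |cc / x ^ 3 * w| ≤ Real.pi := by
    rw [abs_mul, abs_of_pos (by positivity)]
    calc cc / x ^ 3 * |w| ≤ cc / x ^ 3 * (Real.sqrt 6 * x ^ 3) := by gcongr
      _ = Real.pi := by unfold cc; field_simp
  have hn : ∀ w, ‖Complex.exp (-zz x w)‖ = Real.exp (-(cc / x ^ 2)) := by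
    intro w; rw [Complex.norm_exp, Complex.neg_re, zz_re]
  have hlt : Real.exp (-(cc / x ^ 2)) < 1 := by simpa using ht0
  have hS := saving ht0 ht1 hθ
  have hB := EP_bound ((hn w).trans_lt hlt)
  rw [hn w] at hB
  have h0 : Complex.exp (-zz x 0) = ((Real.exp (-(cc / x ^ 2)) : ℝ) : ℂ) := by
    unfold zz; push_cast; simp
  have hw2 : w ^ 2 ≤ 6 * x ^ 6 := by
    rw [← sq_abs]
    calc |w| ^ 2 ≤ (Real.sqrt 6 * x ^ 3) ^ 2 := by gcongr
      _ = 6 * x ^ 6 := by rw [mul_pow, Real.sq_sqrt (by norm_num)]; ring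
  have hE := exp_saving (S := (1 - Real.exp (-(cc / x ^ 2)))⁻¹ -
    ((1 - Complex.exp (-zz x w))⁻¹).re) hx0 hw2 (by
      refine le_trans ?_ hS
      have : (cc / x ^ 3 * w) ^ 2 / (15 * (cc / x ^ 2) * ((cc / x ^ 2) ^ 2 + (cc / x ^ 3 * w) ^ 2))
        = x ^ 2 * w ^ 2 / ((15 * cc) * (x ^ 2 + w ^ 2)) := by
        have : x ^ 2 + w ^ 2 ≠ 0 := by positivity
        field_simp
      rw [this]
      gcongr
      linarith)
  unfold GG
  simp only [norm_mul]
  rw [Complex.norm_exp, Complex.norm_exp ((x ^ 4 : ℝ) * zz x 0), Complex.re_ofReal_mul,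
    Complex.re_ofReal_mul, zz_re, zz_re, h0]
  have := hB.trans (mul_le_mul_of_nonneg_left hE (norm_nonneg _))
  calc _ ≤ ‖(x : ℂ)‖ * (‖(EP ((Real.exp (-(cc / x ^ 2)) : ℝ) : ℂ))⁻¹‖ *
        (2304001 * (1 + w ^ 2)⁻¹) * Real.exp (x ^ 4 * (cc / x ^ 2))) *
          ‖((Real.exp (-(2 * cc * x ^ 2)) : ℝ) : ℂ)‖ := by gcongr
    _ = _ := by ring

lemma GG_cont {x : ℝ} (hx : 0 < x) : Continuous (GG x) := by
  have hz : Continuous (zz x) := by unfold zz; fun_prop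
  have hE : Continuous fun w => EP (Complex.exp (-zz x w)) := by
    rw [continuous_iff_continuousAt]
    intro w
    refine ContinuousAt.comp (f := fun w => Complex.exp (-zz x w)) (EP_continuousAt ?_) (by fun_prop)
    rw [Complex.norm_exp, Complex.neg_re, zz_re]
    have := cc_pos
    have : 0 < cc / x ^ 2 := by positivity
    simpa using this
  have hE' : Continuous fun w => (EP (Complex.exp (-zz x w)))⁻¹ := hE.inv₀ fun w => by
    refine EP_ne_zero ?_
    rw [Complex.norm_exp, Complex.neg_re, zz_re]
    have := cc_pos
    have : 0 < cc / x ^ 2 := by positivity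
    simpa using this
  unfold GG
  fun_prop

lemma GG_integral_tendsto :
    Tendsto (fun x : ℝ => ∫ w in (-(Real.sqrt 6 * x ^ 3))..(Real.sqrt 6 * x ^ 3), GG x w) atTop
      (𝓝 ((Real.sqrt (cc / (2 * Real.pi)) * Real.sqrt (Real.pi / cc) : ℝ) : ℂ)) := by
  obtain ⟨C, hC⟩ : ∃ C, ∀ᶠ x in atTop, ‖GG x 0‖ ≤ C := by
    have h := (GG_tendsto 0).norm
    exact ⟨_, (h.eventually (eventually_lt_nhds (lt_add_one _))).mono fun _ h => h.le⟩
  have H := MeasureTheory.tendsto_integral_filter_of_dominated_convergence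
    (μ := MeasureTheory.volume) (l := atTop)
    (F := fun x : ℝ => Set.indicator (Set.Ioc (-(Real.sqrt 6 * x ^ 3)) (Real.sqrt 6 * x ^ 3)) (GG x))
    (f := fun w => ((Real.sqrt (cc / (2 * Real.pi)) * Real.exp (-cc * w ^ 2) : ℝ) : ℂ))
    (fun w => |C| * (2304001 * (1 + w ^ 2)⁻¹)) ?_ ?_ ?_ ?_
  · rw [integral_complex_ofReal, MeasureTheory.integral_const_mul, integral_gaussian] at H
    refine H.congr' ?_
    filter_upwards [eventually_gt_atTop 0] with x hx
    rw [MeasureTheory.integral_indicator measurableSet_Ioc,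
      intervalIntegral.integral_of_le]
    have : 0 ≤ Real.sqrt 6 * x ^ 3 := by positivity
    linarith
  · filter_upwards [eventually_gt_atTop 0] with x hx
    exact (GG_cont hx).aestronglyMeasurable.indicator measurableSet_Ioc
  · filter_upwards [eventually_ge_atTop 2, hC] with x hx hxC
    refine MeasureTheory.ae_of_all _ fun w => ?_
    by_cases hw : w ∈ Set.Ioc (-(Real.sqrt 6 * x ^ 3)) (Real.sqrt 6 * x ^ 3)
    · rw [Set.indicator_of_mem hw]
      refine (GG_norm_le hx (abs_le.mpr ⟨hw.1.le, hw.2⟩)).trans ?_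
      gcongr
      exact hxC.trans (le_abs_self _)
    · rw [Set.indicator_of_notMem hw, norm_zero]
      positivity
  · exact (integrable_inv_one_add_sq.const_mul _).const_mul _
  · refine MeasureTheory.ae_of_all _ fun w => ?_
    refine (GG_tendsto w).congr' ?_
    have hB : Tendsto (fun x : ℝ => Real.sqrt 6 * x ^ 3) atTop atTop :=
      (tendsto_pow_atTop (by norm_num)).const_mul_atTop (by positivity)
    filter_upwards [hB.eventually_gt_atTop |w|] with x hx
    rw [Set.indicator_of_mem]
    have := abs_lt.mp hx
    exact ⟨this.1, this.2.le⟩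

lemma p_eq (n : ℕ) {x : ℝ} (hx : 0 < x) (hn : (n : ℝ) = x ^ 4) :
    ((cc / (2 * Real.pi) : ℝ) : ℂ) *
      ∫ w in (-(Real.sqrt 6 * x ^ 3))..(Real.sqrt 6 * x ^ 3), GG x w =
      (((p n : ℝ) * n * Real.exp (-(2 * cc * x ^ 2)) : ℝ) : ℂ) := by
  have hc := cc_pos
  have hk : cc / x ^ 3 ≠ 0 := by positivity
  have h1 := cauchy_p n (t := cc / x ^ 2) (by positivity)
  have h2 := intervalIntegral.integral_comp_mul_left (a := -(Real.sqrt 6 * x ^ 3))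
    (b := Real.sqrt 6 * x ^ 3) (fun θ : ℝ =>
      (EP (Complex.exp (-(((cc / x ^ 2 : ℝ) : ℂ) + θ * Complex.I))))⁻¹ *
      Complex.exp (n * (((cc / x ^ 2 : ℝ) : ℂ) + θ * Complex.I))) hk
  have e1 : cc / x ^ 3 * (Real.sqrt 6 * x ^ 3) = Real.pi := by unfold cc; field_simp
  rw [mul_neg, e1, h1] at h2
  have hnc : ((x ^ 4 : ℝ) : ℂ) = n := by rw [← hn]; simp
  unfold GG
  rw [intervalIntegral.integral_mul_const, intervalIntegral.integral_const_mul, hnc]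
  unfold zz
  rw [h2, Complex.real_smul]
  have hxc : (x : ℂ) ≠ 0 := by exact_mod_cast hx.ne'
  have hcc : (cc : ℂ) ≠ 0 := by exact_mod_cast cc_pos.ne'
  have hπ : (Real.pi : ℂ) ≠ 0 := by exact_mod_cast Real.pi_ne_zero
  rw [Complex.ofReal_mul, Complex.ofReal_mul, hn]
  push_cast
  field_simp

theorem hardy_ramanujan_partition_asymptotic :
    Filter.Tendsto
      (fun n : ℕ =>
        (p n : ℝ) * (4 * (n : ℝ) * Real.sqrt 3) / Real.exp (Real.pi * Real.sqrt (2 * (n : ℝ) / 3)))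
      Filter.atTop (nhds 1) := by
  have hx : Tendsto (fun n : ℕ => Real.sqrt (Real.sqrt n)) atTop atTop :=
    Real.tendsto_sqrt_atTop.comp (Real.tendsto_sqrt_atTop.comp tendsto_natCast_atTop_atTop)
  have h1 := (GG_integral_tendsto.comp hx).const_mul ((cc / (2 * Real.pi) : ℝ) : ℂ)
  have h2 := (Complex.continuous_re.tendsto _).comp h1
  have h3 := h2.const_mul (4 * Real.sqrt 3)
  have hc := cc_pos
  have hlim : 4 * Real.sqrt 3 * (((cc / (2 * Real.pi) : ℝ) : ℂ) *
      ((Real.sqrt (cc / (2 * Real.pi)) * Real.sqrt (Real.pi / cc) : ℝ) : ℂ)).re = 1 := by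
    rw [← Complex.ofReal_mul, Complex.ofReal_re, ← Real.sqrt_mul (by positivity)]
    have e1 : cc / (2 * Real.pi) * (Real.pi / cc) = 1 / 2 := by field_simp
    have e2 : Real.sqrt 6 = Real.sqrt 3 * Real.sqrt 2 := by
      rw [← Real.sqrt_mul (by norm_num)]; norm_num
    rw [e1, cc, e2, Real.sqrt_div (by norm_num), Real.sqrt_one]
    have e3 : Real.sqrt 2 * Real.sqrt 2 = 2 := Real.mul_self_sqrt (by norm_num)
    field_simp
    nlinarith
  rw [hlim] at h3
  refine h3.congr' ?_
  filter_upwards [eventually_gt_atTop 0] with n hn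
  have hn0 : (0 : ℝ) < n := by exact_mod_cast hn
  have hsx : Real.sqrt (Real.sqrt n) ^ 2 = Real.sqrt n := Real.sq_sqrt (Real.sqrt_nonneg _)
  have hx4 : (n : ℝ) = Real.sqrt (Real.sqrt n) ^ 4 := by
    rw [show (4 : ℕ) = 2 * 2 by norm_num, pow_mul, hsx, Real.sq_sqrt hn0.le]
  have hpos : 0 < Real.sqrt (Real.sqrt n) := by positivity
  have he := p_eq n hpos hx4
  simp only [Function.comp_apply]
  rw [he, Complex.ofReal_re, hsx, Real.exp_neg]
  have hexp : 2 * cc * Real.sqrt n = Real.pi * Real.sqrt (2 * n / 3) := by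
    have : (2 * (n : ℝ) / 3) = (2 / Real.sqrt 6) ^ 2 * n := by
      rw [div_pow, Real.sq_sqrt (by norm_num)]; ring
    rw [this, Real.sqrt_mul (by positivity), Real.sqrt_sq (by positivity), cc]
    ring
  rw [hexp]
  ring
end

section
/- As n → ∞, p_σ(n+1) ∼ e^{4π√n/√23} / (n^{5/4}·23^{1/4}·√2); that is, the sequence p_σ(n+1) · n^{5/4} · 23^{1/4} · √2 / exp(4π·√n/√23) tends to 1 as n → ∞. -/
open Filter

/-- `pSigma n = ∑_{j ≥ 0, 23j ≤ n} p(n − 23j)·p(j)`, the Fourier coefficients in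
`q·η(z)⁻¹η(23z)⁻¹ = ∑_{n≥0} pSigma(n)qⁿ`. -/
def pSigma (n : ℕ) : ℕ := ∑ j ∈ Finset.range (n / 23 + 1), p (n - 23 * j) * p j


/-- Euler product -/
noncomputable def EE (q : ℂ) : ℂ := ∏' n : ℕ, (1 - q ^ (n + 1))

lemma EE_tendsto {q : ℂ} (hq : ‖q‖ < 1) :
    Tendsto (fun N => ∏ i ∈ Finset.range N, (1 - q ^ (i + 1))) atTop (nhds (EE q)) :=
  (ModularForm.multipliable_one_sub_pow hq).hasProd.tendsto_prod_nat

lemma EE_ne_zero {q : ℂ} (hq : ‖q‖ < 1) : EE q ≠ 0 := by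
  unfold EE
  have h := tprod_one_add_ne_zero_of_summable (R := ℂ) (f := fun n : ℕ => -q ^ (n + 1)) ?_ ?_
  · simpa [sub_eq_add_neg] using h
  · intro i h
    have h1 : q ^ (i + 1) = 1 := by linear_combination -h
    have h2 : ‖q‖ ^ (i + 1) = 1 := by rw [← norm_pow, h1, norm_one]
    have h3 : ‖q‖ ^ (i + 1) < 1 := pow_lt_one₀ (norm_nonneg _) hq (by omega)
    linarith
  · simpa using (summable_nat_add_iff 1).mpr (summable_geometric_of_lt_one (norm_nonneg _) hq)

/-- formal geometric series -/
noncomputable def geoS (k : ℕ) : PowerSeries ℝ := PowerSeries.mk fun n => if (k + 1) ∣ n then 1 else 0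

/-- truncated partition generating series -/
noncomputable def pN (N : ℕ) : PowerSeries ℝ := ∏ i ∈ Finset.range N, geoS i

lemma geoS_hasSum (k : ℕ) {q : ℂ} (hq : ‖q‖ < 1) :
    HasSum (fun n => ((geoS k).coeff n : ℂ) * q ^ n) (1 - q ^ (k + 1))⁻¹ := by
  have h1 : ‖q ^ (k + 1)‖ < 1 := by rw [norm_pow]; exact pow_lt_one₀ (norm_nonneg _) hq (by omega)
  have h := hasSum_geometric_of_norm_lt_one h1
  have inj : Function.Injective (fun j : ℕ => (k + 1) * j) := fun a b h =>
    Nat.eq_of_mul_eq_mul_left (Nat.succ_pos k) h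
  rw [← inj.hasSum_iff]
  · refine h.congr_fun ?_
    intro j
    simp [geoS, pow_mul]
  · intro n hn
    have : ¬ (k + 1) ∣ n := fun ⟨c, hc⟩ => hn ⟨c, hc.symm⟩
    simp [geoS, this]

lemma geoS_nonneg (k n : ℕ) : 0 ≤ (geoS k).coeff n := by
  simp only [geoS, PowerSeries.coeff_mk]; split_ifs <;> norm_num

lemma pN_succ (N : ℕ) : pN (N + 1) = pN N * geoS N := Finset.prod_range_succ _ _

lemma pN_nonneg (N n : ℕ) : 0 ≤ (pN N).coeff n := by
  induction N generalizing n with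
  | zero => simp [pN, PowerSeries.coeff_one]; split_ifs <;> norm_num
  | succ N ih =>
    rw [pN_succ, PowerSeries.coeff_mul]
    exact Finset.sum_nonneg fun x _ => mul_nonneg (ih _) (geoS_nonneg _ _)

lemma pN_mono (n : ℕ) : Monotone fun N => (pN N).coeff n := by
  refine monotone_nat_of_le_succ fun N => ?_
  rw [pN_succ, PowerSeries.coeff_mul]
  have := Finset.single_le_sum (s := Finset.HasAntidiagonal.antidiagonal n)
    (f := fun x : ℕ × ℕ => (pN N).coeff x.1 * (geoS N).coeff x.2)
    (fun x _ => mul_nonneg (pN_nonneg _ _) (geoS_nonneg _ _)) (a := (n, 0)) (by simp)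
  simpa [geoS] using this

lemma hasSum_mul_ps (f g : PowerSeries ℝ) {s t q : ℂ}
    (hf : HasSum (fun n => (f.coeff n : ℂ) * q ^ n) s)
    (hg : HasSum (fun n => (g.coeff n : ℂ) * q ^ n) t) :
    HasSum (fun n => ((f * g).coeff n : ℂ) * q ^ n) (s * t) := by
  have h := (summable_norm_sum_mul_antidiagonal_of_summable_norm hf.summable.norm
    hg.summable.norm).of_norm.hasSum
  rw [← tsum_mul_tsum_eq_tsum_sum_antidiagonal_of_summable_norm hf.summable.norm
    hg.summable.norm, hf.tsum_eq, hg.tsum_eq] at h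
  refine h.congr_fun ?_
  intro n
  rw [PowerSeries.coeff_mul]
  push_cast
  rw [Finset.sum_mul]
  refine Finset.sum_congr rfl fun x hx => ?_
  rw [← Finset.HasAntidiagonal.mem_antidiagonal.1 hx, pow_add]; ring

lemma pN_hasSum (N : ℕ) {q : ℂ} (hq : ‖q‖ < 1) :
    HasSum (fun n => ((pN N).coeff n : ℂ) * q ^ n) (∏ i ∈ Finset.range N, (1 - q ^ (i + 1)))⁻¹ := by
  induction N with
  | zero =>
    have : HasSum (fun n : ℕ => if n = 0 then (1 : ℂ) else 0) 1 := hasSum_ite_eq 0 1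
    simp only [pN, Finset.range_zero, Finset.prod_empty, inv_one]
    convert this using 1
    funext n
    rw [PowerSeries.coeff_one]
    split_ifs with h <;> simp [h]
  | succ N ih =>
    rw [pN_succ, Finset.prod_range_succ, mul_inv]
    exact hasSum_mul_ps _ _ ih (geoS_hasSum N hq)

open PowerSeries PowerSeries.WithPiTopology in
lemma pN_tendsto (n : ℕ) : Tendsto (fun N => (pN N).coeff n) atTop (nhds (p n : ℝ)) := by
  have h := (Nat.Partition.hasProd_genFun (R := ℝ) (fun _ _ => 1)).tendsto_prod_nat
  rw [WithPiTopology.tendsto_iff_coeff_tendsto] at h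
  have h2 := h n
  rw [Nat.Partition.coeff_genFun] at h2
  have e : (∑ P : n.Partition, P.parts.toFinsupp.prod (fun _ _ => (1 : ℝ))) = (p n : ℝ) := by
    simp [Finsupp.prod, p]
  rw [e] at h2
  refine h2.congr fun N => ?_
  congr 1
  refine Finset.prod_congr rfl fun i _ => ?_
  ext m
  have hs := Nat.Partition.summable_genFun_term (R := ℝ) (fun _ _ => 1) i
  have hs2 := (PowerSeries.WithPiTopology.continuous_coeff ℝ m)
  rw [map_add]
  have h3 := hs.hasSum.map (PowerSeries.coeff (R := ℝ) m) hs2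
  rw [← h3.tsum_eq]
  simp only [geoS, PowerSeries.coeff_mk, Function.comp_def, one_smul, PowerSeries.coeff_X_pow,
    PowerSeries.coeff_one]
  rcases Nat.eq_zero_or_pos m with rfl | hm
  · simp
  · by_cases hd : (i + 1) ∣ m
    · obtain ⟨c, rfl⟩ := hd
      obtain ⟨c, rfl⟩ : ∃ d, c = d + 1 := ⟨c - 1, by
        rcases c with _ | c
        · simp at hm
        · simp⟩
      rw [tsum_eq_single c]
      · simp
      · intro b hb
        rw [if_neg]
        intro h
        exact hb (by have := Nat.eq_of_mul_eq_mul_left (Nat.succ_pos i) h; omega)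
    · rw [if_neg (by omega), if_neg hd]
      rw [zero_add]
      refine (tsum_congr fun b => ?_).trans tsum_zero
      rw [if_neg]
      rintro rfl
      exact hd ⟨_, rfl⟩

lemma pN_le (N n : ℕ) : (pN N).coeff n ≤ p n := (pN_mono n).ge_of_tendsto (pN_tendsto n) N

lemma p_summable {r : ℝ} (h0 : 0 ≤ r) (h1 : r < 1) : Summable fun n => (p n : ℝ) * r ^ n := by
  have hr : ‖(r : ℂ)‖ < 1 := by simpa [abs_of_nonneg h0] using h1
  have ht := (EE_tendsto hr).inv₀ (EE_ne_zero hr)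
  have hb := ht.norm.bddAbove_range
  obtain ⟨C, hC⟩ := hb
  refine summable_of_sum_range_le (c := C) (fun n => by positivity) fun M => ?_
  have h2 : Tendsto (fun N => ∑ n ∈ Finset.range M, (pN N).coeff n * r ^ n) atTop
      (nhds (∑ n ∈ Finset.range M, (p n : ℝ) * r ^ n)) :=
    tendsto_finsetSum _ fun n _ => (pN_tendsto n).mul_const _
  refine le_of_tendsto h2 (Eventually.of_forall fun N => ?_)
  have h3 := pN_hasSum N hr
  have h4 : HasSum (fun n => (pN N).coeff n * r ^ n)
      ((∏ i ∈ Finset.range N, (1 - (r : ℂ) ^ (i + 1)))⁻¹).re := by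
    have := Complex.hasSum_re h3
    convert this using 1
    funext n
    norm_cast
  refine (sum_le_hasSum _ (fun n _ => mul_nonneg (pN_nonneg _ _) (by positivity)) h4).trans ?_
  exact (Complex.re_le_norm _).trans (hC ⟨N, rfl⟩)

lemma p_hasSum {q : ℂ} (hq : ‖q‖ < 1) : HasSum (fun n => (p n : ℂ) * q ^ n) (EE q)⁻¹ := by
  have hs : Summable fun n => ‖(p n : ℂ) * q ^ n‖ := by
    simpa using p_summable (norm_nonneg q) hq
  have ht := (EE_tendsto hq).inv₀ (EE_ne_zero hq)
  have h2 := tendsto_tsum_of_dominated_convergence (𝓕 := atTop)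
    (f := fun N n => ((pN N).coeff n : ℂ) * q ^ n) (g := fun n => (p n : ℂ) * q ^ n) hs
    (fun n => ((Complex.continuous_ofReal.tendsto _).comp (pN_tendsto n)).mul_const _)
    (Eventually.of_forall fun N n => by
      simp only [norm_mul, norm_pow, Complex.norm_real, Complex.norm_natCast, Real.norm_eq_abs,
        abs_of_nonneg (pN_nonneg N n)]
      gcongr
      exact pN_le N n)
  have h3 : (fun N => ∑' n, ((pN N).coeff n : ℂ) * q ^ n) =
      fun N => (∏ i ∈ Finset.range N, (1 - q ^ (i + 1)))⁻¹ := by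
    funext N; exact (pN_hasSum N hq).tsum_eq
  rw [h3] at h2
  rw [tendsto_nhds_unique ht h2]
  exact hs.of_norm.hasSum

lemma pSigma_hasSum {q : ℂ} (hq : ‖q‖ < 1) :
    HasSum (fun n => (pSigma n : ℂ) * q ^ n) ((EE q)⁻¹ * (EE (q ^ 23))⁻¹) := by
  have h1 : ‖q ^ 23‖ < 1 := by rw [norm_pow]; exact pow_lt_one₀ (norm_nonneg _) hq (by omega)
  let g : PowerSeries ℝ := PowerSeries.mk fun n => if 23 ∣ n then (p (n / 23) : ℝ) else 0
  let f : PowerSeries ℝ := PowerSeries.mk fun n => (p n : ℝ)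
  have hf : HasSum (fun n => (f.coeff n : ℂ) * q ^ n) (EE q)⁻¹ := by
    simpa [f] using p_hasSum hq
  have hg : HasSum (fun n => (g.coeff n : ℂ) * q ^ n) (EE (q ^ 23))⁻¹ := by
    have inj : Function.Injective (fun j : ℕ => 23 * j) := fun a b h =>
      Nat.eq_of_mul_eq_mul_left (by norm_num) h
    rw [← inj.hasSum_iff]
    · refine (p_hasSum h1).congr_fun ?_
      intro j
      simp [g, pow_mul]
    · intro n hn
      have : ¬ 23 ∣ n := fun ⟨c, hc⟩ => hn ⟨c, hc.symm⟩
      simp [g, this]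
  convert hasSum_mul_ps f g hf hg using 1
  funext n
  congr 1
  have : (pSigma n : ℝ) = (f * g).coeff n := by
    rw [PowerSeries.coeff_mul, ← Finset.Nat.sum_antidiagonal_swap,
      Finset.Nat.sum_antidiagonal_eq_sum_range_succ_mk]
    simp only [f, g, PowerSeries.coeff_mk, Prod.swap]
    rw [← Finset.sum_filter_of_ne (p := fun k => 23 ∣ k)]
    · rw [pSigma]
      push_cast
      refine Finset.sum_bij (fun j _ => 23 * j) ?_ ?_ ?_ ?_
      · intro j hj
        simp only [Finset.mem_range, Finset.mem_filter] at *
        omega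
      · intro a _ b _ h
        omega
      · intro b hb
        simp only [Finset.mem_range, Finset.mem_filter] at hb
        refine ⟨b / 23, ?_, ?_⟩
        · simp only [Finset.mem_range]; omega
        · omega
      · intro j hj
        simp
    · intro k _ h
      by_contra hc
      simp [hc] at h
  rw [← this]; simp

lemma one_sub_bound {w : ℂ} (hw : ‖w‖ < 1) :
    ‖(1 - w)⁻¹‖ ≤ (1 - ‖w‖)⁻¹ * Real.exp (-(‖w‖ - w.re)) := by
  have hne : 1 - w ≠ 0 := by
    intro h
    have : w = 1 := by linear_combination -h
    rw [this] at hw; simp at hw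
  have h1 := Complex.hasSum_re (Complex.hasSum_taylorSeries_neg_log hw)
  have h2 := Real.hasSum_pow_div_log_of_abs_lt_one (x := ‖w‖) (by simpa using hw)
  have h3 := (hasSum_nat_add_iff' 1).2 h1
  simp only [Finset.sum_range_one] at h3
  have h4 := h2.sub h3
  have h5 := le_hasSum h4 0 (fun n _ => by
    rw [sub_nonneg]
    have e : ((w ^ (n + 1) / ((n + 1 : ℕ) : ℂ)).re) = (w ^ (n + 1)).re / ((n : ℝ) + 1) := by
      rw [Complex.div_natCast_re]; push_cast; rfl
    rw [e]
    gcongr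
    rw [← norm_pow]
    exact Complex.re_le_norm _)
  have h6 : ‖(1 - w)⁻¹‖ = Real.exp (-Complex.log (1 - w)).re := by
    rw [← Complex.norm_exp, Complex.exp_neg, Complex.exp_log hne]
  have h7 : (1 - ‖w‖)⁻¹ = Real.exp (- Real.log (1 - ‖w‖)) := by
    rw [Real.exp_neg, Real.exp_log (by linarith)]
  rw [h6, h7, ← Real.exp_add]
  gcongr
  simp at h5
  simp
  linarith

lemma EE_bound {q : ℂ} (hq : ‖q‖ < 1) :
    ‖(EE q)⁻¹‖ ≤ ‖(EE (‖q‖ : ℂ))⁻¹‖ * Real.exp (-(‖q‖ / (1 - ‖q‖) - (q / (1 - q)).re)) := by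
  have hr : ‖((‖q‖ : ℝ) : ℂ)‖ < 1 := by simpa using hq
  have t1 := ((EE_tendsto hq).inv₀ (EE_ne_zero hq)).norm
  have t2 := ((EE_tendsto hr).inv₀ (EE_ne_zero hr)).norm
  have g1 : HasSum (fun n : ℕ => q ^ (n + 1)) (q / (1 - q)) := by
    have := (hasSum_geometric_of_norm_lt_one hq).mul_left q
    refine this.congr_fun fun n => ?_
    rw [pow_succ']
  have g2 : HasSum (fun n : ℕ => ‖q‖ ^ (n + 1)) (‖q‖ / (1 - ‖q‖)) := by
    have := (hasSum_geometric_of_lt_one (norm_nonneg q) hq).mul_left ‖q‖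
    refine this.congr_fun fun n => ?_
    rw [pow_succ']
  have g3 := (g2.sub (Complex.hasSum_re g1)).tendsto_sum_nat
  have t3 := t2.mul (Real.continuous_exp.tendsto _ |>.comp g3.neg)
  refine le_of_tendsto_of_tendsto' t1 t3 fun N => ?_
  simp only [Function.comp_def]
  rw [← Finset.sum_neg_distrib, Real.exp_sum, ← Finset.prod_inv_distrib, ← Finset.prod_inv_distrib,
    norm_prod, norm_prod, ← Finset.prod_mul_distrib]
  refine Finset.prod_le_prod (fun _ _ => norm_nonneg _) fun i _ => ?_
  have hw : ‖q ^ (i + 1)‖ < 1 := by rw [norm_pow]; exact pow_lt_one₀ (norm_nonneg _) hq (by omega)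
  have h := one_sub_bound hw
  have e : ‖(1 - ((‖q‖ : ℝ) : ℂ) ^ (i + 1))⁻¹‖ = (1 - ‖q ^ (i + 1)‖)⁻¹ := by
    rw [← Complex.ofReal_pow, ← Complex.ofReal_one, ← Complex.ofReal_sub, ← Complex.ofReal_inv,
      Complex.norm_real, norm_pow, Real.norm_of_nonneg]
    rw [norm_pow] at hw
    exact inv_nonneg.2 (by linarith)
  rw [e]
  simpa using h

lemma EE_bound' {q : ℂ} (hq : ‖q‖ < 1) : ‖(EE q)⁻¹‖ ≤ ‖(EE (‖q‖ : ℂ))⁻¹‖ := by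
  have hr : ‖((‖q‖ : ℝ) : ℂ)‖ < 1 := by simpa using hq
  have h1 := p_hasSum hq
  have h2 := p_hasSum hr
  have h3 : HasSum (fun n => (p n : ℝ) * ‖q‖ ^ n) ((EE (‖q‖ : ℂ))⁻¹).re := by
    refine (Complex.hasSum_re h2).congr_fun fun n => ?_
    norm_cast
  refine le_trans ?_ (Complex.re_le_norm _)
  rw [← h1.tsum_eq]
  refine tsum_of_norm_bounded h3 fun n => ?_
  simp

/-- the gain -/
lemma gain_eq {r : ℝ} (h0 : 0 < r) (h1 : r < 1) (θ : ℝ) :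
    r / (1 - r) - ((r * Complex.exp (θ * Complex.I)) / (1 - r * Complex.exp (θ * Complex.I))).re
      = r * (1 + r) * (1 - Real.cos θ) / ((1 - r) * ((1 - r) ^ 2 + 2 * r * (1 - Real.cos θ))) := by
  have hc := Real.cos_le_one θ
  have hs := Real.sin_sq_add_cos_sq θ
  have hD : 0 < (1 - r) ^ 2 + 2 * r * (1 - Real.cos θ) := by
    have : 0 < (1 - r) ^ 2 := by have : 0 < 1 - r := by linarith
                                 positivity
    have : 0 ≤ 2 * r * (1 - Real.cos θ) := mul_nonneg (by linarith) (by linarith)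
    linarith
  have hre : ((r * Complex.exp (θ * Complex.I)) / (1 - r * Complex.exp (θ * Complex.I))).re
      = (r * Real.cos θ - r ^ 2) / ((1 - r) ^ 2 + 2 * r * (1 - Real.cos θ)) := by
    rw [Complex.div_re]
    have e1 : (r * Complex.exp (θ * Complex.I)).re = r * Real.cos θ := by
      simp [Complex.exp_ofReal_mul_I_re]
    have e2 : (r * Complex.exp (θ * Complex.I)).im = r * Real.sin θ := by
      simp [Complex.exp_ofReal_mul_I_im]
    have e3 : Complex.normSq (1 - r * Complex.exp (θ * Complex.I))
        = (1 - r) ^ 2 + 2 * r * (1 - Real.cos θ) := by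
      rw [Complex.normSq_apply, Complex.sub_re, Complex.sub_im, e1, e2]
      simp only [Complex.one_re, Complex.one_im]
      linear_combination r ^ 2 * hs
    rw [Complex.sub_re, Complex.sub_im, e1, e2, e3]
    simp only [Complex.one_re, Complex.one_im]
    rw [← add_div]
    congr 1
    linear_combination -r ^ 2 * hs
  rw [hre]
  have : 1 - r ≠ 0 := by linarith
  rw [div_sub_div _ _ this hD.ne', div_left_inj' (mul_ne_zero this hD.ne')]
  ring

lemma gain_bound {s u : ℝ} (hs : 0 < s) (hs1 : s ^ 2 ≤ 1 / 2) (hu : |s ^ 3 * u| ≤ Real.pi) :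
    u ^ 2 / (10 + 4 * s ^ 2 * u ^ 2) ≤
      Real.exp (-s ^ 2) / (1 - Real.exp (-s ^ 2)) - ((Real.exp (-s ^ 2) *
        Complex.exp ((s ^ 3 * u : ℝ) * Complex.I)) / (1 - Real.exp (-s ^ 2) *
        Complex.exp ((s ^ 3 * u : ℝ) * Complex.I))).re := by
  have hr1 : Real.exp (-s ^ 2) < 1 := by
    rw [Real.exp_lt_one_iff]; simp [hs]
  rw [gain_eq (Real.exp_pos _) hr1]
  set r := Real.exp (-s ^ 2) with hr
  set θ := s ^ 3 * u with hθ
  have hr2 : 1 - s ^ 2 ≤ r := by have := Real.add_one_le_exp (-s ^ 2); linarith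
  have hc : Real.cos θ ≤ 1 - 2 / Real.pi ^ 2 * θ ^ 2 := Real.cos_le_one_sub_mul_cos_sq hu
  have hpi : Real.pi ^ 2 ≤ 10 := by
    have := Real.pi_lt_d2; have := Real.pi_pos; nlinarith
  have hk : θ ^ 2 / 5 ≤ 1 - Real.cos θ := by
    have : (1:ℝ) / 5 ≤ 2 / Real.pi ^ 2 := by
      rw [div_le_div_iff₀ (by norm_num) (by positivity)]; linarith
    nlinarith [sq_nonneg θ]
  set k := 1 - Real.cos θ with hkdef
  have hk0 : 0 ≤ k := by have := Real.cos_le_one θ; linarith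
  have h1r : 0 < 1 - r := by linarith
  -- step
  have step1 : (1 / 2) * k / (s ^ 2 * (s ^ 4 + 2 * k)) ≤
      r * (1 + r) * k / ((1 - r) * ((1 - r) ^ 2 + 2 * r * k)) := by
    apply div_le_div₀
    · have : 0 < r := Real.exp_pos _
      positivity
    · gcongr
      nlinarith
    · have : 0 < r := Real.exp_pos _
      positivity
    · have : 0 < r := Real.exp_pos _
      gcongr
      · linarith
      · calc (1 - r) ^ 2 ≤ (s ^ 2) ^ 2 := by gcongr; linarith
          _ = s ^ 4 := by ring
      · nlinarith
  refine le_trans ?_ step1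
  rw [div_le_div_iff₀ (by positivity) (by positivity)]
  have hθ2 : θ ^ 2 = s ^ 6 * u ^ 2 := by rw [hθ]; ring
  have : s ^ 6 * u ^ 2 / 5 ≤ k := by rw [← hθ2]; exact hk
  nlinarith

lemma exp_gain_bound {s u : ℝ} (hs : 0 < s) (hu : |s ^ 3 * u| ≤ Real.pi) :
    Real.exp (-(u ^ 2 / (10 + 4 * s ^ 2 * u ^ 2))) ≤ 80000 * (1 + u ^ 2)⁻¹ := by
  have hpi : Real.pi ^ 2 ≤ 10 := by
    have := Real.pi_lt_d2; have := Real.pi_pos; nlinarith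
  have h6 : s ^ 6 * u ^ 2 ≤ 10 := by
    have := sq_le_sq' (by linarith [abs_nonneg (s ^ 3 * u), Real.pi_pos]) hu
    rw [sq_abs] at this
    nlinarith
  set G := u ^ 2 / (10 + 4 * s ^ 2 * u ^ 2) with hG
  have hG0 : 0 ≤ G := by positivity
  rw [Real.exp_neg, ← div_eq_mul_inv, ← one_div, div_le_div_iff₀ (Real.exp_pos _) (by positivity)]
  have hexp : 1 + G ^ 3 / 6 ≤ Real.exp G := by
    have := Real.sum_le_exp_of_nonneg hG0 4
    simp [Finset.sum_range_succ, Nat.factorial] at this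
    nlinarith [sq_nonneg G]
  have hmul : G * (10 + 4 * s ^ 2 * u ^ 2) = u ^ 2 := by rw [hG]; field_simp
  have hcube : (10 + 4 * s ^ 2 * u ^ 2) ^ 3 ≤ 4000 + 2560 * u ^ 4 := by
    have a0 : 0 ≤ 4 * s ^ 2 * u ^ 2 := by positivity
    have h : (10 + 4 * s ^ 2 * u ^ 2) ^ 3 ≤ 4 * (10 ^ 3 + (4 * s ^ 2 * u ^ 2) ^ 3) := by
      set x := 4 * s ^ 2 * u ^ 2
      nlinarith [mul_nonneg (add_nonneg (by norm_num : (0:ℝ) ≤ 10) a0) (sq_nonneg (x - 10))]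
    have e : (4 * s ^ 2 * u ^ 2) ^ 3 = 64 * (s ^ 6 * u ^ 2) * u ^ 4 := by ring
    have : 64 * (s ^ 6 * u ^ 2) * u ^ 4 ≤ 64 * 10 * u ^ 4 := by gcongr
    linarith
  have key : u ^ 6 ≤ G ^ 3 * (4000 + 2560 * u ^ 4) := by
    calc u ^ 6 = (G * (10 + 4 * s ^ 2 * u ^ 2)) ^ 3 := by rw [hmul]; ring
      _ = G ^ 3 * (10 + 4 * s ^ 2 * u ^ 2) ^ 3 := by ring
      _ ≤ _ := by gcongr
  have hg3 : 0 ≤ G ^ 3 := by positivity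
  rcases le_total (u ^ 2) 1 with h | h
  · nlinarith
  · have h4 : 1 ≤ u ^ 4 := by nlinarith
    have : u ^ 2 * u ^ 4 ≤ (6560 * G ^ 3) * u ^ 4 := by nlinarith
    have : u ^ 2 ≤ 6560 * G ^ 3 := le_of_mul_le_mul_right this (by linarith)
    nlinarith

open ModularForm in
lemma eta_eq_EE (z : ℂ) : eta z = Complex.exp (2 * Real.pi * Complex.I * z / 24) *
    EE (Complex.exp (2 * Real.pi * Complex.I * z)) := by
  simp only [eta, EE, eta_q_eq_pow, Function.Periodic.qParam]
  norm_num

lemma csqrt_exp {z : ℂ} (h : z ≠ 0) : Complex.sqrt z = Complex.exp (Complex.log z / 2) := by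
  rw [Complex.sqrt, Complex.cpow_def_of_ne_zero h, div_eq_mul_inv]

lemma csqrt_sq (z : ℂ) : Complex.sqrt z * Complex.sqrt z = z := by
  by_cases h : z = 0
  · subst h; simp [Complex.sqrt]
  · rw [csqrt_exp h, ← Complex.exp_add, ← add_div, ← two_mul]
    rw [mul_div_cancel_left₀ _ two_ne_zero, Complex.exp_log h]

lemma csqrt_mul_pos {z : ℂ} (hz : z ≠ 0) {r : ℝ} (hr : 0 < r) :
    Complex.sqrt z * Complex.sqrt (r * z) = Real.sqrt r * z := by
  have hrz : (r : ℂ) * z ≠ 0 := mul_ne_zero (by exact_mod_cast hr.ne') hz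
  rw [csqrt_exp hz, csqrt_exp hrz, Complex.log_ofReal_mul hr hz,
    ← Complex.exp_add]
  have : Complex.log z / 2 + (Real.log r + Complex.log z) / 2
    = ((Real.log r / 2 : ℝ) : ℂ) + Complex.log z := by push_cast; ring
  rw [this, Complex.exp_add, Complex.exp_log hz, ← Complex.ofReal_exp,
    ← Real.log_sqrt hr.le, Real.exp_log (Real.sqrt_pos.2 hr)]

open Complex in
lemma transf {τ : ℂ} (hτ : 0 < τ.re) :
    (EE (exp (-τ)))⁻¹ * (EE (exp (-τ) ^ 23))⁻¹ * exp τ =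
      Real.sqrt 23 * τ / (2 * Real.pi) * exp (4 * Real.pi ^ 2 / (23 * τ)) *
        ((EE (exp (-(4 * Real.pi ^ 2 / τ))))⁻¹ * (EE (exp (-(4 * Real.pi ^ 2 / (23 * τ)))))⁻¹) := by
  have hτ0 : τ ≠ 0 := by rintro rfl; simp at hτ
  have hpi : (Real.pi : ℂ) ≠ 0 := by exact_mod_cast Real.pi_ne_zero
  set z : ℂ := I * τ / (2 * Real.pi) with hz
  have hz0 : z ≠ 0 := by rw [hz]; simp [hτ0, hpi]
  have hzre : z = ((1 / (2 * Real.pi) : ℝ) : ℂ) * (I * τ) := by rw [hz]; push_cast; ring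
  have hzim : z.im = (1 / (2 * Real.pi)) * τ.re := by
    rw [hzre, Complex.im_ofReal_mul]; simp
  have hzm : z ∈ UpperHalfPlane.upperHalfPlaneSet := by
    show 0 < z.im
    rw [hzim]; have := Real.pi_pos; positivity
  have hzm2 : ((23 : ℝ) : ℂ) * z ∈ UpperHalfPlane.upperHalfPlaneSet := by
    show 0 < (((23 : ℝ) : ℂ) * z).im
    rw [Complex.im_ofReal_mul]; have : 0 < z.im := hzm
    positivity
  have h1 := ModularForm.eta_comp_eq_csqrt_I_inv hzm
  have h2 := ModularForm.eta_comp_eq_csqrt_I_inv hzm2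
  have hI : Complex.sqrt I ≠ 0 := by
    intro h
    have := csqrt_sq I
    rw [h, mul_zero] at this
    exact I_ne_zero this.symm
  simp only [Function.comp, Pi.smul_apply, Pi.mul_apply, smul_eq_mul] at h1 h2
  have h3 : ModularForm.eta (-1 / z) * ModularForm.eta (-1 / (((23 : ℝ) : ℂ) * z)) * I =
      Real.sqrt 23 * z * (ModularForm.eta z * ModularForm.eta (((23 : ℝ) : ℂ) * z)) := by
    rw [h1, h2, ← csqrt_mul_pos hz0 (by norm_num : (0:ℝ) < 23)]
    nth_rewrite 3 [← csqrt_sq I]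
    field_simp
  rw [eta_eq_EE, eta_eq_EE, eta_eq_EE, eta_eq_EE] at h3
  have I2 := Complex.I_sq
  have e1 : 2 * Real.pi * I * (-1 / z) = -(4 * Real.pi ^ 2 / τ) := by
    rw [hz]; field_simp; ring
  have e2 : 2 * Real.pi * I * (-1 / (((23 : ℝ) : ℂ) * z)) = -(4 * Real.pi ^ 2 / (23 * τ)) := by
    rw [hz]; push_cast; field_simp; ring
  have e3 : 2 * Real.pi * I * z = -τ := by
    rw [hz]; field_simp; linear_combination I2
  have e4 : 2 * Real.pi * I * (((23 : ℝ) : ℂ) * z) = (23 : ℕ) * -τ := by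
    push_cast; linear_combination 23 * e3
  rw [e1, e2, e3, e4] at h3
  have hn : ∀ w : ℂ, 0 < w.re → EE (exp (-w)) ≠ 0 := fun w hw => EE_ne_zero (by
    rw [Complex.norm_exp]; simpa using hw)
  have n1 := hn τ hτ
  have n2 := hn (23 * τ) (by simpa using hτ)
  have hinv : 0 < (τ⁻¹).re := by
    rw [Complex.inv_re]; exact div_pos hτ (Complex.normSq_pos.2 hτ0)
  have n3 := hn (4 * Real.pi ^ 2 / τ) (by
    rw [div_eq_mul_inv, show (4 * (Real.pi:ℂ) ^ 2) = ((4 * Real.pi ^ 2 : ℝ) : ℂ) by push_cast; rfl,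
      Complex.re_ofReal_mul]
    have := Real.pi_pos; positivity)
  have n4 := hn (4 * Real.pi ^ 2 / (23 * τ)) (by
    rw [show (4 * (Real.pi:ℂ) ^ 2 / (23 * τ)) = ((4 * Real.pi ^ 2 / 23 : ℝ) : ℂ) * τ⁻¹ by
      push_cast; field_simp,
      Complex.re_ofReal_mul]
    have := Real.pi_pos; positivity)
  rw [← Complex.exp_nat_mul]
  have n2' : EE (exp ((23 : ℕ) * -τ)) ≠ 0 := by convert n2 using 3; push_cast; ring
  generalize hA : EE (exp (-τ)) = A at *
  generalize hB : EE (exp ((23 : ℕ) * -τ)) = B at *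
  generalize hC : EE (exp (-(4 * Real.pi ^ 2 / τ))) = C at *
  generalize hD : EE (exp (-(4 * Real.pi ^ 2 / (23 * τ)))) = D at *
  have x1 : exp (-(4 * Real.pi ^ 2 / τ) / 24) * exp (-(4 * Real.pi ^ 2 / (23 * τ)) / 24) =
      (exp (4 * Real.pi ^ 2 / (23 * τ)) )⁻¹ * 1 := by
    rw [← Complex.exp_neg, mul_one, ← Complex.exp_add]; congr 1; field_simp; ring
  have x2 : exp (-τ / 24) * exp ((23 : ℕ) * -τ / 24) = (exp τ)⁻¹ := by
    rw [← Complex.exp_neg, ← Complex.exp_add]; congr 1; push_cast; ring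
  have h4 : (exp (4 * Real.pi ^ 2 / (23 * τ)))⁻¹ * (C * D) =
      Real.sqrt 23 * τ / (2 * Real.pi) * ((exp τ)⁻¹ * (A * B)) := by
    have h5 : I * ((exp (4 * Real.pi ^ 2 / (23 * τ)))⁻¹ * (C * D)) =
        I * (Real.sqrt 23 * τ / (2 * Real.pi) * ((exp τ)⁻¹ * (A * B))) := by
      rw [← x2]
      have : Real.sqrt 23 * z = I * (Real.sqrt 23 * τ / (2 * Real.pi)) := by rw [hz]; ring
      rw [this] at h3
      linear_combination h3 - I * C * D * x1
    exact mul_left_cancel₀ I_ne_zero h5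
  have ne1 := Complex.exp_ne_zero τ
  have ne2 := Complex.exp_ne_zero (4 * Real.pi ^ 2 / (23 * τ))
  generalize exp τ = X at *
  generalize exp (4 * Real.pi ^ 2 / (23 * τ)) = Y at *
  generalize (Real.sqrt 23 : ℂ) * τ / (2 * Real.pi) = W at *
  field_simp at h4 ⊢
  linear_combination h4

lemma EE_tendsto_one : Tendsto EE (nhds 0) (nhds 1) := by
  have h := (ModularForm.differentiableOn_tprod_one_sub_pow.differentiableAt
    (Metric.isOpen_ball.mem_nhds (Metric.mem_ball_self one_pos))).continuousAt.tendsto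
  have e : EE = fun q => ∏' n : ℕ, (1 - q ^ (n + 1)) := by funext q; rfl
  rw [e]
  simpa using h

lemma coeff_integral (m : ℕ) {y : ℝ} (hy : 0 < y) :
    ∫ θ in (-Real.pi)..Real.pi,
      (EE (Complex.exp (-(y - θ * Complex.I))))⁻¹ * (EE (Complex.exp (-(y - θ * Complex.I)) ^ 23))⁻¹
        * Complex.exp (m * (y - θ * Complex.I)) = 2 * Real.pi * pSigma m := by
  have hq : ∀ θ : ℝ, ‖Complex.exp (-(y - θ * Complex.I))‖ = Real.exp (-y) := fun θ => by
    rw [Complex.norm_exp]; simp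
  have hr : Real.exp (-y) < 1 := by simpa using hy
  have hS : ∀ θ : ℝ, HasSum (fun n => (pSigma n : ℂ) * Complex.exp (-(y - θ * Complex.I)) ^ n
      * Complex.exp (m * (y - θ * Complex.I)))
      ((EE (Complex.exp (-(y - θ * Complex.I))))⁻¹ *
        (EE (Complex.exp (-(y - θ * Complex.I)) ^ 23))⁻¹
        * Complex.exp (m * (y - θ * Complex.I))) := fun θ =>
    (pSigma_hasSum (by rw [hq]; exact hr)).mul_right _
  have hsum : Summable fun n => (pSigma n : ℝ) * Real.exp (-y) ^ n * Real.exp (m * y) := by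
    have := (hS 0).summable.norm
    refine this.congr fun n => ?_
    rw [norm_mul, norm_mul, norm_pow, hq, Complex.norm_exp]
    simp
  have key := intervalIntegral.hasSum_integral_of_dominated_convergence
    (μ := MeasureTheory.volume) (a := -Real.pi) (b := Real.pi)
    (F := fun (n : ℕ) (θ : ℝ) => (pSigma n : ℂ) * Complex.exp (-(y - θ * Complex.I)) ^ n
      * Complex.exp (m * (y - θ * Complex.I)))
    (fun n _ => (pSigma n : ℝ) * Real.exp (-y) ^ n * Real.exp (m * y))
    (fun n => (Continuous.aestronglyMeasurable (by fun_prop)))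
    (fun n => Eventually.of_forall fun θ _ => by
      rw [norm_mul, norm_mul, norm_pow, hq, Complex.norm_exp]
      simp)
    (Eventually.of_forall fun θ _ => hsum)
    (by simp)
    (Eventually.of_forall fun θ _ => hS θ)
  refine key.unique ?_
  have h0 : ∀ n, n ≠ m → ∫ θ in (-Real.pi)..Real.pi, (pSigma n : ℂ) *
      Complex.exp (-(y - θ * Complex.I)) ^ n * Complex.exp (m * (y - θ * Complex.I)) = 0 := by
    intro n hn
    have hne : ((n : ℂ) - m) * Complex.I ≠ 0 :=
      mul_ne_zero (sub_ne_zero.2 (by exact_mod_cast hn)) Complex.I_ne_zero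
    have e : ∀ θ : ℝ, (pSigma n : ℂ) * Complex.exp (-(y - θ * Complex.I)) ^ n *
        Complex.exp (m * (y - θ * Complex.I)) =
        ((pSigma n : ℂ) * Complex.exp (((m : ℂ) - n) * y)) *
          Complex.exp ((((n : ℂ) - m) * Complex.I) * θ) := fun θ => by
      rw [← Complex.exp_nat_mul, mul_assoc, mul_assoc, ← Complex.exp_add, ← Complex.exp_add]
      congr 2; ring
    simp_rw [e]
    rw [intervalIntegral.integral_const_mul, integral_exp_mul_complex hne]
    have : Complex.exp (((n : ℂ) - m) * Complex.I * Real.pi) =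
        Complex.exp (((n : ℂ) - m) * Complex.I * (-Real.pi : ℝ)) := by
      rw [Complex.exp_eq_exp_iff_exists_int]
      exact ⟨(n : ℤ) - m, by push_cast; ring⟩
    rw [this]; simp
  have h1 : ∫ θ in (-Real.pi)..Real.pi, (pSigma m : ℂ) *
      Complex.exp (-(y - θ * Complex.I)) ^ m * Complex.exp (m * (y - θ * Complex.I))
      = 2 * Real.pi * pSigma m := by
    have e : ∀ θ : ℝ, (pSigma m : ℂ) * Complex.exp (-(y - θ * Complex.I)) ^ m *
        Complex.exp (m * (y - θ * Complex.I)) = (pSigma m : ℂ) := fun θ => by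
      rw [← Complex.exp_nat_mul, mul_assoc, ← Complex.exp_add]
      ring_nf; simp
    simp_rw [e]
    rw [intervalIntegral.integral_const, Complex.real_smul]
    push_cast
    ring
  rw [← h1]
  exact hasSum_single m fun n hn => h0 n hn

/-- the point `τ = s² - i s³ u` -/
noncomputable def tauP (s u : ℝ) : ℂ := ((s ^ 2 : ℝ) : ℂ) - ((s ^ 3 * u : ℝ) : ℂ) * Complex.I

/-- the integrand in scaled variables -/
noncomputable def HH (s u : ℝ) : ℂ :=
  (EE (Complex.exp (-tauP s u)))⁻¹ * (EE (Complex.exp (-tauP s u) ^ 23))⁻¹ *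
    Complex.exp ((((4 * Real.pi ^ 2 / (23 * s ^ 4) + 1 : ℝ)) : ℂ) * tauP s u)

/-- normalising factor -/
noncomputable def NN (s : ℝ) : ℝ :=
  Real.sqrt 23 * s ^ 2 / (2 * Real.pi) * Real.exp (8 * Real.pi ^ 2 / (23 * s ^ 2))

/-- normalised integrand -/
noncomputable def PHI (s u : ℝ) : ℂ :=
  (1 - s * u * Complex.I) *
    Complex.exp (-((4 * Real.pi ^ 2 / 23) * u ^ 2 / (1 - s * u * Complex.I))) *
    ((EE (Complex.exp (-(4 * Real.pi ^ 2 / tauP s u))))⁻¹ *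
      (EE (Complex.exp (-(4 * Real.pi ^ 2 / (23 * tauP s u)))))⁻¹)

lemma tauP_re (s u : ℝ) : (tauP s u).re = s ^ 2 := by
  simp only [tauP, Complex.sub_re, Complex.ofReal_re, Complex.re_ofReal_mul, Complex.I_re]; ring

lemma tauP_im (s u : ℝ) : (tauP s u).im = -(s ^ 3 * u) := by
  simp only [tauP, Complex.sub_im, Complex.ofReal_im, Complex.im_ofReal_mul, Complex.I_im]; ring

lemma one_sub_ne (s u : ℝ) : (1 - s * u * Complex.I : ℂ) ≠ 0 := by
  intro h
  have := congrArg Complex.re h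
  simp [mul_assoc] at this

lemma HH_eq {s : ℝ} (hs : 0 < s) (u : ℝ) : HH s u = NN s * PHI s u := by
  have ht := transf (τ := tauP s u) (by rw [tauP_re]; positivity)
  have hd := one_sub_ne s u
  have hs0 : (s : ℂ) ≠ 0 := by exact_mod_cast hs.ne'
  have hpi : (Real.pi : ℂ) ≠ 0 := by exact_mod_cast Real.pi_ne_zero
  have e0 : tauP s u = s ^ 2 * (1 - s * u * Complex.I) := by
    simp only [tauP]; push_cast; ring
  have e1 : Complex.exp ((((4 * Real.pi ^ 2 / (23 * s ^ 4) + 1 : ℝ)) : ℂ) * tauP s u) =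
      Complex.exp (tauP s u) * Complex.exp (4 * Real.pi ^ 2 / (23 * s ^ 4) * tauP s u) := by
    rw [← Complex.exp_add]; congr 1; push_cast; ring
  have e2 : Complex.exp (4 * Real.pi ^ 2 / (23 * tauP s u)) *
      Complex.exp (4 * Real.pi ^ 2 / (23 * s ^ 4) * tauP s u) =
      Complex.exp (8 * Real.pi ^ 2 / (23 * s ^ 2)) *
      Complex.exp (-((4 * Real.pi ^ 2 / 23) * u ^ 2 / (1 - s * u * Complex.I))) := by
    rw [← Complex.exp_add, ← Complex.exp_add]; congr 1
    rw [e0]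
    have I2 := Complex.I_sq
    field_simp
    linear_combination (4 * s ^ 2 * u ^ 2) * I2
  rw [HH, e1, ← mul_assoc, ht, NN, PHI]
  push_cast
  have e3 : (Real.sqrt 23 : ℂ) * tauP s u / (2 * Real.pi) =
      Real.sqrt 23 * s ^ 2 / (2 * Real.pi) * (1 - s * u * Complex.I) := by rw [e0]; ring
  rw [e3]
  linear_combination (Real.sqrt 23 * s ^ 2 / (2 * Real.pi) * (1 - s * u * Complex.I)) *
    ((EE (Complex.exp (-(4 * Real.pi ^ 2 / tauP s u))))⁻¹ *
      (EE (Complex.exp (-(4 * Real.pi ^ 2 / (23 * tauP s u)))))⁻¹) * e2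

lemma exp_tau_tendsto (u : ℝ) {c : ℝ} (hc : 0 < c) :
    Tendsto (fun s : ℝ => Complex.exp (-(c / tauP s u))) (nhdsWithin 0 (Set.Ioi 0)) (nhds 0) := by
  rw [tendsto_zero_iff_norm_tendsto_zero]
  simp_rw [Complex.norm_exp]
  refine Real.tendsto_exp_atBot.comp ?_
  have h1 : Tendsto (fun s : ℝ => s ^ 2 * (1 + s ^ 2 * u ^ 2)) (nhdsWithin 0 (Set.Ioi 0))
      (nhdsWithin 0 (Set.Ioi 0)) := by
    refine tendsto_nhdsWithin_iff.2 ⟨?_, ?_⟩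
    · have : Continuous fun s : ℝ => s ^ 2 * (1 + s ^ 2 * u ^ 2) := by fun_prop
      have := this.tendsto 0
      simp at this
      exact this.mono_left nhdsWithin_le_nhds
    · filter_upwards [self_mem_nhdsWithin] with s hs
      have : 0 < s := hs
      exact Set.mem_Ioi.2 (by positivity)
  have h2 := (tendsto_inv_nhdsGT_zero.comp h1).const_mul_atTop hc
  have h3 := tendsto_neg_atTop_atBot.comp h2
  refine h3.congr' ?_
  filter_upwards [self_mem_nhdsWithin] with s hs
  have hs : 0 < s := hs
  simp only [Function.comp_def, Complex.neg_re]
  rw [div_eq_mul_inv, Complex.re_ofReal_mul, Complex.inv_re, Complex.normSq_apply, tauP_re, tauP_im]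
  field_simp

lemma PHI_tendsto (u : ℝ) : Tendsto (fun s => PHI s u) (nhdsWithin 0 (Set.Ioi 0))
    (nhds ((Real.exp (-(4 * Real.pi ^ 2 / 23) * u ^ 2) : ℝ) : ℂ)) := by
  have hpi := Real.pi_pos
  have hE : ∀ c : ℝ, 0 < c → Tendsto (fun s : ℝ => (EE (Complex.exp (-(c / tauP s u))))⁻¹)
      (nhdsWithin 0 (Set.Ioi 0)) (nhds 1) := fun c hc => by
    simpa using (EE_tendsto_one.comp (exp_tau_tendsto u hc)).inv₀ one_ne_zero
  have h1 := hE (4 * Real.pi ^ 2) (by positivity)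
  have h2 := hE (4 * Real.pi ^ 2 / 23) (by positivity)
  have h3 : Tendsto (fun s : ℝ => (1 - s * u * Complex.I) *
    Complex.exp (-((4 * Real.pi ^ 2 / 23) * u ^ 2 / (1 - s * u * Complex.I))))
      (nhdsWithin 0 (Set.Ioi 0))
      (nhds ((Real.exp (-(4 * Real.pi ^ 2 / 23) * u ^ 2) : ℝ) : ℂ)) := by
    have hc : Continuous fun s : ℝ => (1 - s * u * Complex.I) *
        Complex.exp (-((4 * Real.pi ^ 2 / 23) * u ^ 2 / (1 - s * u * Complex.I))) := by
      have := fun s : ℝ => one_sub_ne s u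
      fun_prop (disch := assumption)
    have := hc.tendsto 0
    refine (this.mono_left nhdsWithin_le_nhds).congr' .rfl |>.trans (le_of_eq ?_)
    congr 1
    push_cast
    simp
  have h4 := h3.mul (h1.mul h2)
  simp only [mul_one] at h4
  refine h4.congr fun s => ?_
  rw [PHI]
  push_cast
  rw [div_div]

lemma prod_aux {a b a' b' c k : ℝ} (hb : 0 ≤ b) (hc : 0 ≤ c) (hk : 0 ≤ k)
    (ha' : 0 ≤ a') (h1 : a ≤ a' * k) (h2 : b ≤ b') : a * b * c ≤ a' * b' * c * k := by
  have h := mul_le_mul_of_nonneg_right (mul_le_mul h1 h2 hb (mul_nonneg ha' hk)) hc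
  linarith

lemma HH_bound {s u : ℝ} (hs : 0 < s) (hs1 : s ^ 2 ≤ 1 / 2) (hu : |s ^ 3 * u| ≤ Real.pi) :
    ‖HH s u‖ ≤ ‖HH s 0‖ * (80000 * (1 + u ^ 2)⁻¹) := by
  have hr : Real.exp (-s ^ 2) < 1 := by
    rw [Real.exp_lt_one_iff]; simp [hs]
  have hn : ∀ v, ‖Complex.exp (-tauP s v)‖ = Real.exp (-s ^ 2) := fun v => by
    rw [Complex.norm_exp, Complex.neg_re, tauP_re]
  have h0 : Complex.exp (-tauP s 0) = ((Real.exp (-s ^ 2) : ℝ) : ℂ) := by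
    rw [tauP]; push_cast; simp
  have hq : ‖Complex.exp (-tauP s u)‖ < 1 := by rw [hn]; exact hr
  have hq23 : ‖Complex.exp (-tauP s u) ^ 23‖ < 1 := by
    rw [norm_pow]; exact pow_lt_one₀ (norm_nonneg _) hq (by omega)
  have b1 := EE_bound hq
  have b2 := EE_bound' hq23
  rw [norm_pow, hn] at b2
  rw [hn] at b1
  have hqe : Complex.exp (-tauP s u) = Real.exp (-s ^ 2) *
      Complex.exp ((s ^ 3 * u : ℝ) * Complex.I) := by
    rw [Complex.ofReal_exp, ← Complex.exp_add, tauP]; congr 1; push_cast; ring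
  have g := gain_bound hs hs1 hu
  rw [← hqe] at g
  have e := exp_gain_bound hs hu
  have b3 : ‖(EE (Complex.exp (-tauP s u)))⁻¹‖ ≤
      ‖(EE (Complex.exp (-tauP s 0)))⁻¹‖ * (80000 * (1 + u ^ 2)⁻¹) := by
    refine b1.trans ?_
    rw [h0]
    gcongr
    refine le_trans ?_ e
    gcongr
  have b4 : ‖(EE (Complex.exp (-tauP s u) ^ 23))⁻¹‖ ≤ ‖(EE (Complex.exp (-tauP s 0) ^ 23))⁻¹‖ := by
    rw [h0, ← Complex.ofReal_pow]; exact b2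
  have b5 : ∀ v, ‖Complex.exp ((((4 * Real.pi ^ 2 / (23 * s ^ 4) + 1 : ℝ)) : ℂ) * tauP s v)‖ =
      Real.exp ((4 * Real.pi ^ 2 / (23 * s ^ 4) + 1) * s ^ 2) := fun v => by
    rw [Complex.norm_exp, Complex.re_ofReal_mul, tauP_re]
  have b6 : ∀ v, ‖HH s v‖ = ‖(EE (Complex.exp (-tauP s v)))⁻¹‖ *
      ‖(EE (Complex.exp (-tauP s v) ^ 23))⁻¹‖ *
      Real.exp ((4 * Real.pi ^ 2 / (23 * s ^ 4) + 1) * s ^ 2) := fun v => by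
    rw [HH, norm_mul, norm_mul, b5]
  rw [b6, b6]
  exact prod_aux (norm_nonneg _) (Real.exp_pos _).le (by positivity)
    (norm_nonneg _) b3 b4

lemma NN_pos {s : ℝ} (hs : 0 < s) : 0 < NN s := by
  have := Real.pi_pos
  unfold NN; positivity

lemma PHI_bound {s u : ℝ} (hs : 0 < s) (hs1 : s ^ 2 ≤ 1 / 2) (hu : |s ^ 3 * u| ≤ Real.pi) :
    ‖PHI s u‖ ≤ ‖PHI s 0‖ * (80000 * (1 + u ^ 2)⁻¹) := by
  have h := HH_bound hs hs1 hu
  rw [HH_eq hs, HH_eq hs, norm_mul, norm_mul, mul_assoc] at h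
  exact le_of_mul_le_mul_left h (by
    rw [Complex.norm_real, Real.norm_of_nonneg (NN_pos hs).le]; exact NN_pos hs)

lemma HH_continuous {s : ℝ} (hs : 0 < s) : Continuous (HH s) := by
  have hq : ∀ u, ‖Complex.exp (-tauP s u)‖ < 1 := fun u => by
    rw [Complex.norm_exp, Complex.neg_re, tauP_re, Real.exp_lt_one_iff]; simp [hs]
  have hq23 : ∀ u, ‖Complex.exp (-tauP s u) ^ 23‖ < 1 := fun u => by
    rw [norm_pow]; exact pow_lt_one₀ (norm_nonneg _) (hq u) (by omega)
  have hEE : ContinuousOn EE (Metric.ball 0 1) :=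
    ModularForm.differentiableOn_tprod_one_sub_pow.continuousOn
  have ht : Continuous (tauP s) := by unfold tauP; fun_prop
  have c1 : Continuous fun u => EE (Complex.exp (-tauP s u)) :=
    hEE.comp_continuous (by fun_prop) fun u => by simpa using hq u
  have c2 : Continuous fun u => EE (Complex.exp (-tauP s u) ^ 23) :=
    hEE.comp_continuous (by fun_prop) fun u => by simpa using hq23 u
  have c3 := c1.inv₀ fun u => EE_ne_zero (hq u)
  have c4 := c2.inv₀ fun u => EE_ne_zero (hq23 u)
  unfold HH
  exact (c3.mul c4).mul (by fun_prop)

lemma PHI_continuous {s : ℝ} (hs : 0 < s) : Continuous (PHI s) := by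
  have : PHI s = fun u => (NN s : ℂ)⁻¹ * HH s u := by
    funext u
    rw [HH_eq hs, inv_mul_cancel_left₀]
    exact_mod_cast (NN_pos hs).ne'
  rw [this]
  exact continuous_const.mul (HH_continuous hs)

open MeasureTheory in
lemma int_tendsto : Tendsto (fun s : ℝ => ∫ u in (-(Real.pi / s ^ 3))..(Real.pi / s ^ 3), PHI s u)
    (nhdsWithin 0 (Set.Ioi 0)) (nhds ((Real.sqrt (Real.pi / (4 * Real.pi ^ 2 / 23)) : ℝ) : ℂ)) := by
  have hpi := Real.pi_pos
  have h := tendsto_integral_filter_of_dominated_convergence (μ := (volume : Measure ℝ))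
    (l := nhdsWithin (0 : ℝ) (Set.Ioi 0))
    (F := fun s => (Set.Ioc (-(Real.pi / s ^ 3)) (Real.pi / s ^ 3)).indicator (PHI s))
    (f := fun u => ((Real.exp (-(4 * Real.pi ^ 2 / 23) * u ^ 2) : ℝ) : ℂ))
    (fun u => 2 * (80000 * (1 + u ^ 2)⁻¹)) ?_ ?_ ?_ ?_
  · have hg : ∫ a : ℝ, ((Real.exp (-(4 * Real.pi ^ 2 / 23) * a ^ 2) : ℝ) : ℂ) =
        ((Real.sqrt (Real.pi / (4 * Real.pi ^ 2 / 23)) : ℝ) : ℂ) := by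
      rw [← integral_gaussian]; exact integral_ofReal
    rw [hg] at h
    refine h.congr' ?_
    filter_upwards [self_mem_nhdsWithin] with s hs
    have hs : 0 < s := hs
    rw [integral_indicator measurableSet_Ioc, intervalIntegral.integral_of_le]
    have : 0 < Real.pi / s ^ 3 := by positivity
    linarith
  · filter_upwards [self_mem_nhdsWithin] with s hs
    exact (PHI_continuous hs).aestronglyMeasurable.indicator measurableSet_Ioc
  · have t0 : ∀ᶠ s in nhdsWithin (0 : ℝ) (Set.Ioi 0), ‖PHI s 0‖ < 2 :=
      (PHI_tendsto 0).norm.eventually_lt_const (by simp)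
    have t1 : ∀ᶠ s in nhdsWithin (0 : ℝ) (Set.Ioi 0), s < 1 / 2 :=
      (tendsto_id.mono_left nhdsWithin_le_nhds).eventually_lt_const (by norm_num)
    filter_upwards [self_mem_nhdsWithin, t0, t1] with s hs h0 h1
    have hs : 0 < s := hs
    refine Eventually.of_forall fun u => ?_
    by_cases hu : u ∈ Set.Ioc (-(Real.pi / s ^ 3)) (Real.pi / s ^ 3)
    · rw [Set.indicator_of_mem hu]
      have hu' : |s ^ 3 * u| ≤ Real.pi := by
        rw [abs_mul, abs_of_pos (by positivity : 0 < s ^ 3), mul_comm, ← le_div_iff₀ (by positivity)]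
        exact abs_le.2 ⟨hu.1.le, hu.2⟩
      refine (PHI_bound hs (by nlinarith) hu').trans ?_
      gcongr
    · rw [Set.indicator_of_notMem hu]
      simp; positivity
  · exact (integrable_inv_one_add_sq.const_mul _).const_mul _
  · refine Eventually.of_forall fun u => ?_
    refine (PHI_tendsto u).congr' ?_
    have t1 : ∀ᶠ s in nhdsWithin (0 : ℝ) (Set.Ioi 0), s ^ 3 * |u| < Real.pi := by
      have hc : Continuous fun s : ℝ => s ^ 3 * |u| := by fun_prop
      exact ((hc.tendsto 0).mono_left nhdsWithin_le_nhds).eventually_lt_const (by simpa using hpi)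
    filter_upwards [self_mem_nhdsWithin, t1] with s hs h1
    have hs : 0 < s := hs
    rw [Set.indicator_of_mem]
    have : |u| < Real.pi / s ^ 3 := by rw [lt_div_iff₀ (by positivity)]; linarith
    exact ⟨(abs_lt.1 this).1, (abs_lt.1 this).2.le⟩

lemma pSigma_eq (n : ℕ) {s : ℝ} (hs : 0 < s) (hn : (n : ℝ) * s ^ 4 = 4 * Real.pi ^ 2 / 23) :
    (2 * Real.pi * pSigma (n + 1) : ℂ) = s ^ 3 * NN s *
      ∫ u in (-(Real.pi / s ^ 3))..(Real.pi / s ^ 3), PHI s u := by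
  have h := coeff_integral (n + 1) (y := s ^ 2) (by positivity)
  have hs3 : s ^ 3 ≠ 0 := by positivity
  have hc := intervalIntegral.smul_integral_comp_mul_left (a := -(Real.pi / s ^ 3))
    (b := Real.pi / s ^ 3) (fun θ : ℝ => (EE (Complex.exp (-(((s ^ 2 : ℝ) : ℂ) - θ * Complex.I))))⁻¹
      * (EE (Complex.exp (-(((s ^ 2 : ℝ) : ℂ) - θ * Complex.I)) ^ 23))⁻¹
        * Complex.exp (((n + 1 : ℕ) : ℂ) * (((s ^ 2 : ℝ) : ℂ) - θ * Complex.I))) (s ^ 3)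
  have ea : s ^ 3 * -(Real.pi / s ^ 3) = -Real.pi := by field_simp
  have eb : s ^ 3 * (Real.pi / s ^ 3) = Real.pi := by field_simp
  rw [ea, eb, h] at hc
  have hn2 : ((n + 1 : ℕ) : ℝ) = 4 * Real.pi ^ 2 / (23 * s ^ 4) + 1 := by
    push_cast
    rw [← div_div, ← hn]; field_simp
  have hn3 : ((n + 1 : ℕ) : ℂ) = ((4 * Real.pi ^ 2 / (23 * s ^ 4) + 1 : ℝ) : ℂ) := by
    rw [← hn2]; norm_cast
  rw [← hc, Complex.real_smul, mul_assoc, Complex.ofReal_pow]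
  congr 1
  rw [← intervalIntegral.integral_const_mul (NN s : ℂ) (PHI s)]
  apply intervalIntegral.integral_congr
  intro u _
  simp only
  rw [← HH_eq hs, HH, hn3, tauP, Complex.ofReal_pow]

lemma const_eq : (4 * Real.pi ^ 2 / 23) ^ ((5 : ℝ) / 4) * Real.sqrt 23 / (4 * Real.pi ^ 2) *
    (23 : ℝ) ^ ((1 : ℝ) / 4) * Real.sqrt 2 * Real.sqrt (Real.pi / (4 * Real.pi ^ 2 / 23)) = 1 := by
  have hpi := Real.pi_pos
  rw [← pow_eq_one_iff_of_nonneg (by positivity) (n := 4) (by norm_num)]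
  simp only [mul_pow, div_pow]
  have e1 : ((4 * Real.pi ^ 2 / 23) ^ ((5 : ℝ) / 4)) ^ 4 = (4 * Real.pi ^ 2 / 23) ^ 5 := by
    rw [← Real.rpow_natCast, ← Real.rpow_mul (by positivity)]
    norm_num
  have e2 : ((23 : ℝ) ^ ((1 : ℝ) / 4)) ^ 4 = 23 := by
    rw [← Real.rpow_natCast, ← Real.rpow_mul (by positivity)]
    norm_num
  have e3 : ∀ x : ℝ, 0 ≤ x → Real.sqrt x ^ 4 = x ^ 2 := fun x hx => by
    rw [show 4 = 2 * 2 from rfl, pow_mul, Real.sq_sqrt hx]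
  rw [e1, e2, e3 _ (by norm_num), e3 _ (by norm_num), e3 _ (by positivity)]
  field_simp
  norm_num

/-- As `n → ∞`, `p_σ(n+1) ∼ e^{4π√n/√23} / (n^{5/4}·23^{1/4}·√2)`; that is, the sequence
`p_σ(n+1) · n^{5/4} · 23^{1/4} · √2 / exp(4π·√n/√23)` tends to `1`. -/
theorem pSigma_asymptotic :
    Tendsto
      (fun n : ℕ =>
        (pSigma (n + 1) : ℝ) * (n : ℝ) ^ ((5 : ℝ) / 4) * (23 : ℝ) ^ ((1 : ℝ) / 4) * Real.sqrt 2 /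
          Real.exp (4 * Real.pi * Real.sqrt n / Real.sqrt 23))
      atTop (nhds 1) := by
  have hpi := Real.pi_pos
  set S : ℕ → ℝ := fun n => Real.sqrt (2 * Real.pi / Real.sqrt (23 * n)) with hS
  have hlim : Tendsto S atTop (nhdsWithin 0 (Set.Ioi 0)) := by
    refine tendsto_nhdsWithin_iff.2 ⟨?_, ?_⟩
    · have h1 : Tendsto (fun n : ℕ => Real.sqrt (23 * (n : ℝ))) atTop atTop :=
        Real.tendsto_sqrt_atTop.comp
          (tendsto_natCast_atTop_atTop.const_mul_atTop (by norm_num : (0 : ℝ) < 23))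
      have h2 := (Real.continuous_sqrt.tendsto 0).comp (h1.const_div_atTop (2 * Real.pi))
      rw [Real.sqrt_zero] at h2
      exact h2
    · filter_upwards [eventually_gt_atTop 0] with n hn
      have : (0 : ℝ) < n := by exact_mod_cast hn
      show 0 < S n
      simp only [hS]; positivity
  have hI := int_tendsto.comp hlim
  have hJ := hI.const_mul (((4 * Real.pi ^ 2 / 23) ^ ((5 : ℝ) / 4) * Real.sqrt 23 /
    (4 * Real.pi ^ 2) * (23 : ℝ) ^ ((1 : ℝ) / 4) * Real.sqrt 2 : ℝ) : ℂ)
  rw [← Complex.ofReal_mul, const_eq] at hJ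
  have hR := (Complex.continuous_re.tendsto _).comp hJ
  rw [Complex.ofReal_re] at hR
  refine hR.congr' ?_
  filter_upwards [eventually_gt_atTop 0] with n hn
  have hn0 : (0 : ℝ) < n := by exact_mod_cast hn
  have hs : 0 < S n := by simp only [hS]; positivity
  have hs2 : S n ^ 2 = 2 * Real.pi / Real.sqrt (23 * n) := by
    simp only [hS]; rw [Real.sq_sqrt (by positivity)]
  have hs4 : (n : ℝ) * S n ^ 4 = 4 * Real.pi ^ 2 / 23 := by
    have : S n ^ 4 = (S n ^ 2) ^ 2 := by ring
    rw [this, hs2, div_pow, Real.sq_sqrt (by positivity)]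
    field_simp
    norm_num
  have hexp : 8 * Real.pi ^ 2 / (23 * S n ^ 2) = 4 * Real.pi * Real.sqrt n / Real.sqrt 23 := by
    rw [hs2, Real.sqrt_mul (by norm_num)]
    have h23 : Real.sqrt 23 ^ 2 = 23 := Real.sq_sqrt (by norm_num)
    have : 0 < Real.sqrt 23 := by positivity
    have : 0 < Real.sqrt n := by positivity
    field_simp
    rw [h23]; ring
  have key := pSigma_eq n hs hs4
  have h5 : (4 * Real.pi ^ 2 / 23) ^ ((5 : ℝ) / 4) = (n : ℝ) ^ ((5 : ℝ) / 4) * S n ^ 5 := by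
    rw [← hs4, Real.mul_rpow hn0.le (by positivity)]
    congr 1
    rw [← Real.rpow_natCast, ← Real.rpow_mul hs.le, ← Real.rpow_natCast]
    norm_num
  simp only [Function.comp_def]
  rw [Complex.re_ofReal_mul, h5]
  have kre := congrArg Complex.re key
  have k1 : (2 * Real.pi * pSigma (n + 1) : ℂ) = ((2 * Real.pi * pSigma (n + 1) : ℝ) : ℂ) := by
    push_cast; rfl
  have k2 : ((S n : ℂ) ^ 3 * NN (S n)) = ((S n ^ 3 * NN (S n) : ℝ) : ℂ) := by push_cast; rfl
  rw [k1, k2, Complex.ofReal_re, Complex.re_ofReal_mul, NN, hexp] at kre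
  set J := (∫ u in (-(Real.pi / S n ^ 3))..(Real.pi / S n ^ 3), PHI (S n) u).re
  have kk : (pSigma (n + 1) : ℝ) = S n ^ 5 * Real.sqrt 23 / (4 * Real.pi ^ 2) *
      Real.exp (4 * Real.pi * Real.sqrt n / Real.sqrt 23) * J := by
    have : (pSigma (n + 1) : ℝ) = (2 * Real.pi * pSigma (n + 1)) / (2 * Real.pi) := by field_simp
    rw [this, kre]; ring
  rw [kk]
  have := Real.exp_ne_zero (4 * Real.pi * Real.sqrt n / Real.sqrt 23)
  field_simp
end
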